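/- arXiv:math/0604521 — 10 statements merged into one kernel-verified Lean document; each statement's English description precedes it below -/
import Mathlib

section
/- If A and B are n×n nonsingular integer matrices, then D(A·B) ≤ D(A)·D(B). -/
open Matrix Finset

/-- `D(M) = Σ_j max(0, max_i (−m_{ij})) + max(0, max_i Σ_j m_{ij})`,
the degree of the projective monomial map associated to the integer matrix `M`. -/
def Dmat {n : ℕ} (M : Matrix (Fin n) (Fin n) ℤ) : ℤ :=
  (∑ j : Fin n, Finset.univ.fold max 0 (fun i : Fin n => -M i j)) +
    Finset.univ.fold max 0 (fun i : Fin n => ∑ j : Fin n, M i j)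

/-!
Homogenizing a monomial map turns its exponent matrix into a matrix `M` whose rows sum to zero, by
appending the column of negated row sums and a zero row. Clearing denominators then adds to each
column `j` the constant `poleOrder M j`, which makes all entries nonnegative and all row sums equal
to the degree. If `P` and `Q` arise in this way from `A` and `B`, then `P * Q` is nonnegative with
row sums `deg A * deg B`, and it differs from `A * B` by a constant `d k` in each column `k`. Hence
`d` clears the denominators of `A * B`, and the degree of `A * B`, which is the least total of such
constants, is at most `∑ k, d k = deg A * deg B`.
-/

section ClearDenominators

variable {l m n R : Type*} [Ring R] [LinearOrder R]
  [Fintype l] [Nonempty l] [Fintype m] [Nonempty m]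

/-- The pole order along the `j`-th coordinate hyperplane of the Laurent monomials with exponents
the rows of `M`. It is negative when the `j`-th variable divides all of them. -/
def poleOrder (M : Matrix m n R) (j : n) : R :=
  univ.sup' univ_nonempty fun i => -M i j

/-- The degree of the projective map whose homogeneous coordinates are the Laurent monomials with
exponents the rows of `M`, after denominators and common factors are removed. It has this meaning
when the rows of `M` sum to zero. -/
def homogeneousDegree [Fintype n] (M : Matrix m n R) : R :=
  ∑ j, poleOrder M j

/-- The exponent matrix of the same projective map as `M` with denominators and common factors
removed. -/
def clearDenominators (M : Matrix m n R) : Matrix m n R :=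
  M + vecMulVec 1 (poleOrder M)

theorem clearDenominators_apply (M : Matrix m n R) (i : m) (j : n) :
    clearDenominators M i j = M i j + poleOrder M j := by
  simp [clearDenominators]

theorem clearDenominators_mulVec_one [Fintype n] (M : Matrix m n R) (hM : M *ᵥ 1 = 0) :
    clearDenominators M *ᵥ 1 = fun _ => homogeneousDegree M := by
  rw [clearDenominators, add_mulVec, hM, zero_add, vecMulVec_mulVec, dotProduct_one]
  ext
  simp [homogeneousDegree]

theorem clearDenominators_mul_clearDenominators (A : Matrix l m R) (B : Matrix m n R)
    (hA : A *ᵥ 1 = 0) :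
    clearDenominators A * clearDenominators B =
      A * B + vecMulVec 1 (poleOrder A ᵥ* B + homogeneousDegree A • poleOrder B) :=
  calc
    clearDenominators A * clearDenominators B
      = clearDenominators A * B + vecMulVec (clearDenominators A *ᵥ 1) (poleOrder B) := by
        rw [clearDenominators.eq_def B, Matrix.mul_add, mul_vecMulVec]
    _ = A * B + vecMulVec 1 (poleOrder A ᵥ* B) +
          vecMulVec (fun _ => homogeneousDegree A) (poleOrder B) := by
        rw [clearDenominators_mulVec_one A hA, clearDenominators, Matrix.add_mul, vecMulVec_mul]
    _ = A * B + vecMulVec 1 (poleOrder A ᵥ* B + homogeneousDegree A • poleOrder B) := by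
        ext i k
        simp [vecMulVec_apply, add_assoc]

variable [IsOrderedRing R]

theorem poleOrder_le_iff {M : Matrix m n R} {j : n} {d : R} :
    poleOrder M j ≤ d ↔ ∀ i, 0 ≤ M i j + d := by
  simp [poleOrder, neg_le_iff_add_nonneg']

theorem clearDenominators_nonneg (M : Matrix m n R) (i : m) (j : n) :
    0 ≤ clearDenominators M i j := by
  rw [clearDenominators_apply]
  exact poleOrder_le_iff.mp le_rfl i

theorem poleOrder_mul_le (A : Matrix l m R) (B : Matrix m n R) (hA : A *ᵥ 1 = 0) (k : n) :
    poleOrder (A * B) k ≤ (poleOrder A ᵥ* B + homogeneousDegree A • poleOrder B) k := by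
  refine poleOrder_le_iff.mpr fun i => ?_
  have hnonneg : 0 ≤ (clearDenominators A * clearDenominators B) i k :=
    sum_nonneg fun j _ =>
      mul_nonneg (clearDenominators_nonneg A i j) (clearDenominators_nonneg B j k)
  simpa [clearDenominators_mul_clearDenominators A B hA, vecMulVec_apply] using hnonneg

theorem homogeneousDegree_mul_le [Fintype n] (A : Matrix l m R) (B : Matrix m n R)
    (hA : A *ᵥ 1 = 0) (hB : B *ᵥ 1 = 0) :
    homogeneousDegree (A * B) ≤ homogeneousDegree A * homogeneousDegree B :=
  calc
    homogeneousDegree (A * B)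
      ≤ ∑ k, (poleOrder A ᵥ* B + homogeneousDegree A • poleOrder B) k :=
        sum_le_sum fun k _ => poleOrder_mul_le A B hA k
    _ = poleOrder A ⬝ᵥ B *ᵥ 1 + homogeneousDegree A * homogeneousDegree B := by
        rw [dotProduct_mulVec, dotProduct_one]
        simp [sum_add_distrib, mul_sum, homogeneousDegree]
    _ = homogeneousDegree A * homogeneousDegree B := by
        rw [hB, dotProduct_zero, zero_add]

end ClearDenominators

section Homogenize

variable {l m n R : Type*} [Ring R]

/-- The exponent matrix, in homogeneous coordinates, of the monomial map with exponent matrix `M`.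
The index `Sum.inr ()` is that of the homogenizing variable: its column makes the rows sum to
zero, and its row is the constant monomial. -/
def homogenize [Fintype n] (M : Matrix m n R) : Matrix (m ⊕ Unit) (n ⊕ Unit) R :=
  fromBlocks M (replicateCol Unit (-(M *ᵥ 1))) 0 0

theorem homogenize_mul [Fintype m] [Fintype n] (A : Matrix l m R) (B : Matrix m n R) :
    homogenize (A * B) = homogenize A * homogenize B := by
  simp [homogenize, fromBlocks_multiply, ← replicateCol_mulVec, mulVec_neg]

theorem homogenize_mulVec_one [Fintype n] (M : Matrix m n R) : homogenize M *ᵥ 1 = 0 := by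
  ext (i | _) <;> simp [homogenize, mulVec, dotProduct]

end Homogenize

section MonomialDegree

variable {l m n R : Type*} [Fintype l] [Fintype m] [Fintype n] [Ring R] [LinearOrder R]

/-- The degree of a monomial map with exponent matrix `M`, given by the formula of `Dmat` for a
rectangular matrix over an ordered ring. -/
def monomialDegree (M : Matrix m n R) : R :=
  ∑ j, univ.fold max 0 (fun i => -M i j) + univ.fold max 0 (fun i => ∑ j, M i j)

theorem sup'_univ_sum_unit {ι α : Type*} [Fintype ι] [LinearOrder α] (f : ι ⊕ Unit → α) :
    univ.sup' univ_nonempty f = univ.fold max (f (.inr ())) fun i => f (.inl i) :=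
  eq_of_forall_ge_iff fun c => by simp [fold_max_le, Unique.forall_iff, and_comm]

theorem homogeneousDegree_homogenize (M : Matrix m n R) :
    homogeneousDegree (homogenize M) = monomialDegree M := by
  simp [homogeneousDegree, poleOrder, sup'_univ_sum_unit, homogenize, monomialDegree, mulVec,
    dotProduct]

theorem D_mul_le_general [IsOrderedRing R] (A : Matrix l m R) (B : Matrix m n R) :
    monomialDegree (A * B) ≤ monomialDegree A * monomialDegree B := by
  simp only [← homogeneousDegree_homogenize, homogenize_mul]
  exact homogeneousDegree_mul_le _ _ (homogenize_mulVec_one A) (homogenize_mulVec_one B)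

end MonomialDegree

/-- Submultiplicativity of the degree of monomial maps: `D(A·B) ≤ D(A)·D(B)`. -/
theorem D_mul_le {n : ℕ} (A B : Matrix (Fin n) (Fin n) ℤ)
    (hA : A.det ≠ 0) (hB : B.det ≠ 0) :
    Dmat (A * B) ≤ Dmat A * Dmat B :=
  D_mul_le_general A B
end

section
/- If A is an n×n nonsingular integer matrix (n ≥ 1), then the sequence (1/N)·log D(A^N) converges as N → ∞. (Thus the algebraic entropy of the monomial map associated with A is well-defined.) -/
open Matrix Finset Filter

/-!
In homogeneous coordinates the monomial map of `A` lifts to a map all of whose components are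
monomials of one common degree, and the degree of the projective map is the least degree of such a
lift. Composing lifts of two maps gives a lift of the composite whose degree is the product, so
the degree is submultiplicative. It is moreover a positive integer unless the matrix vanishes, so
Fekete's lemma applies to `log D(A ^ N)` as soon as `A` is not nilpotent.
-/

lemma exists_tendsto_inv_mul_log_of_submultiplicative {u : ℕ → ℝ} (one_le : ∀ N, 1 ≤ u N)
    (submul : ∀ M N, u (M + N) ≤ u M * u N) :
    ∃ L : ℝ, Tendsto (fun N : ℕ ↦ 1 / (N : ℝ) * Real.log (u N)) atTop (nhds L) := by
  have u_pos (N) : 0 < u N := one_pos.trans_le (one_le N)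
  have log_subadditive : Subadditive fun N ↦ Real.log (u N) := fun M N ↦ by
    rw [← Real.log_mul (u_pos M).ne' (u_pos N).ne']
    exact Real.log_le_log (u_pos _) (submul M N)
  have bddBelow : BddBelow (Set.range fun N : ℕ ↦ Real.log (u N) / N) :=
    ⟨0, Set.forall_mem_range.2 fun N ↦ div_nonneg (Real.log_nonneg (one_le N)) N.cast_nonneg⟩
  exact ⟨log_subadditive.lim, by
    simpa only [one_div, ← div_eq_inv_mul] using log_subadditive.tendsto_lim bddBelow⟩

lemma not_isNilpotent_of_det_ne_zero {ι R : Type*} [Fintype ι] [DecidableEq ι] [Nonempty ι]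
    [CommRing R] [IsReduced R] {A : Matrix ι ι R} (hA : A.det ≠ 0) : ¬ IsNilpotent A := by
  rintro ⟨k, hk⟩
  refine hA (eq_zero_of_pow_eq_zero (n := k) ?_)
  rw [← det_pow, hk, det_zero]

namespace MonomialMap

section HomogeneousLift

variable {ι R : Type*} [Fintype ι] [CommRing R]

/-- The homogenization of the exponent matrix of a monomial map: its `i`-th row holds the exponents,
possibly negative, of the degree-zero Laurent monomial obtained from row `i` of `M` by dividing by a
power of the homogenizing variable. The latter has index `Sum.inr ()`, and is sent to `1`. -/
def homogenization (M : Matrix ι ι R) : Matrix (ι ⊕ Unit) (ι ⊕ Unit) R :=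
  fromBlocks M (replicateCol Unit (-(M *ᵥ 1))) 0 0

lemma homogenization_mul (M N : Matrix ι ι R) :
    homogenization (M * N) = homogenization M * homogenization N := by
  simp [homogenization, fromBlocks_multiply, ← replicateCol_mulVec, mulVec_neg]

lemma homogenization_mulVec_one (M : Matrix ι ι R) : homogenization M *ᵥ 1 = 0 := by
  ext (i | i) <;> simp [homogenization, mulVec, dotProduct]

lemma forall_neg_homogenization_le_iff [LinearOrder R] {M : Matrix ι ι R} {c : ι ⊕ Unit → R} :
    (∀ i j, -homogenization M i j ≤ c j) ↔
      (∀ j, univ.fold max 0 (fun i ↦ -M i j) ≤ c (.inl j)) ∧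
        univ.fold max 0 (fun i ↦ ∑ j, M i j) ≤ c (.inr ()) := by
  have neg_apply_inr (i : ι) : -homogenization M (.inl i) (.inr ()) = ∑ j, M i j := by
    simp [homogenization, mulVec, dotProduct]
  simp only [fold_max_le, Sum.forall, Unique.forall_iff, PUnit.default_eq_unit, neg_apply_inr,
    mem_univ, forall_and]
  simp only [homogenization, fromBlocks_apply₁₁, fromBlocks_apply₂₁, fromBlocks_apply₂₂,
    Matrix.zero_apply, neg_zero]
  tauto

variable [PartialOrder R]

/-- `P` is the exponent matrix of a homogeneous lift of degree `d` of the monomial map of `M`: its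
rows are exponents of monomials of degree `d`, obtained from those of the homogenization of `M` by
multiplying all the components by one common Laurent monomial, with exponents `c`. -/
structure IsHomogeneousLift (M : Matrix ι ι R) (P : Matrix (ι ⊕ Unit) (ι ⊕ Unit) R) (d : R) :
    Prop where
  nonneg : ∀ i j, 0 ≤ P i j
  mulVec_one : P *ᵥ 1 = d • 1
  exists_eq_add : ∃ c, P = homogenization M + vecMulVec 1 c

namespace IsHomogeneousLift

variable {M N : Matrix ι ι R} {P Q : Matrix (ι ⊕ Unit) (ι ⊕ Unit) R} {d e : R}

lemma sum_row (hP : IsHomogeneousLift M P d) (i : ι ⊕ Unit) : ∑ j, P i j = d := by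
  simpa [mulVec, dotProduct] using congrFun hP.mulVec_one i

lemma apply_eq_add (hP : IsHomogeneousLift M P d) (i j : ι ⊕ Unit) :
    P i j = homogenization M i j + P (.inr ()) j := by
  obtain ⟨c, rfl⟩ := hP.exists_eq_add
  cases j <;> simp [homogenization]

lemma mul [IsOrderedRing R] (hP : IsHomogeneousLift M P d) (hQ : IsHomogeneousLift N Q e) :
    IsHomogeneousLift (M * N) (P * Q) (d * e) where
  nonneg i j := sum_nonneg fun k _ ↦ mul_nonneg (hP.nonneg i k) (hQ.nonneg k j)
  mulVec_one := by
    rw [← mulVec_mulVec, hQ.mulVec_one, mulVec_smul, hP.mulVec_one, smul_smul, mul_comm]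
  exists_eq_add := by
    obtain ⟨a, ha⟩ := hP.exists_eq_add
    obtain ⟨b, hb⟩ := hQ.exists_eq_add
    refine ⟨a ᵥ* Q, ?_⟩
    calc P * Q = homogenization M * Q + vecMulVec 1 a * Q := by rw [ha, Matrix.add_mul]
      _ = homogenization M * homogenization N + vecMulVec (homogenization M *ᵥ 1) b
            + vecMulVec 1 (a ᵥ* Q) := by
        rw [vecMulVec_mul, ← mul_vecMulVec, ← Matrix.mul_add, ← hb]
      _ = homogenization (M * N) + vecMulVec 1 (a ᵥ* Q) := by
        rw [homogenization_mulVec_one, zero_vecMulVec, add_zero, homogenization_mul]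

lemma degree_pos [IsOrderedAddMonoid R] (hP : IsHomogeneousLift M P d) (hM : M ≠ 0) : 0 < d := by
  have d_nonneg : 0 ≤ d := hP.sum_row (.inr ()) ▸ sum_nonneg fun j _ ↦ hP.nonneg _ j
  refine d_nonneg.lt_of_ne' fun hd ↦ hM ?_
  have P_eq_zero : P = 0 := by
    ext i j
    exact (sum_eq_zero_iff_of_nonneg fun j _ ↦ hP.nonneg i j).1 (hd ▸ hP.sum_row i) j (mem_univ j)
  ext i j
  simpa [P_eq_zero, homogenization] using (hP.apply_eq_add (.inl i) (.inl j)).symm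

end IsHomogeneousLift

end HomogeneousLift

section Degree

variable {n : ℕ}

lemma exists_isHomogeneousLift_Dmat (M : Matrix (Fin n) (Fin n) ℤ) :
    ∃ P, IsHomogeneousLift M P (Dmat M) := by
  let c : Fin n ⊕ Unit → ℤ := Sum.elim (fun j ↦ univ.fold max 0 fun i ↦ -M i j)
    fun _ ↦ univ.fold max 0 fun i ↦ ∑ j, M i j
  have sum_c : c ⬝ᵥ 1 = Dmat M := by simp [c, Dmat, dotProduct]
  have neg_le_c : ∀ i j, -homogenization M i j ≤ c j :=
    forall_neg_homogenization_le_iff.2 ⟨fun _ ↦ le_rfl, le_rfl⟩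
  refine ⟨homogenization M + vecMulVec 1 c, fun i j ↦ ?_, ?_, c, rfl⟩
  · simpa [vecMulVec_apply, neg_le_iff_add_nonneg'] using neg_le_c i j
  · rw [add_mulVec, homogenization_mulVec_one, zero_add, vecMulVec_mulVec, sum_c, op_smul_eq_smul]

lemma IsHomogeneousLift.Dmat_le {M : Matrix (Fin n) (Fin n) ℤ}
    {P : Matrix (Fin n ⊕ Unit) (Fin n ⊕ Unit) ℤ} {d : ℤ} (hP : IsHomogeneousLift M P d) :
    Dmat M ≤ d := by
  have neg_le (i j) : -homogenization M i j ≤ P (.inr ()) j :=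
    neg_le_iff_add_nonneg'.2 (hP.apply_eq_add i j ▸ hP.nonneg i j)
  obtain ⟨column_le, row_le⟩ := forall_neg_homogenization_le_iff.1 neg_le
  calc Dmat M ≤ ∑ j, P (.inr ()) (.inl j) + P (.inr ()) (.inr ()) :=
        add_le_add (sum_le_sum fun j _ ↦ column_le j) row_le
    _ = ∑ j, P (.inr ()) j := by simp
    _ = d := hP.sum_row _

lemma Dmat_mul_le (M N : Matrix (Fin n) (Fin n) ℤ) : Dmat (M * N) ≤ Dmat M * Dmat N := by
  obtain ⟨P, hP⟩ := exists_isHomogeneousLift_Dmat M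
  obtain ⟨Q, hQ⟩ := exists_isHomogeneousLift_Dmat N
  exact (hP.mul hQ).Dmat_le

lemma Dmat_pos {M : Matrix (Fin n) (Fin n) ℤ} (hM : M ≠ 0) : 0 < Dmat M := by
  obtain ⟨P, hP⟩ := exists_isHomogeneousLift_Dmat M
  exact hP.degree_pos hM

end Degree

end MonomialMap

open MonomialMap

theorem algebraicEntropy_exists_general {n : ℕ} (A : Matrix (Fin n) (Fin n) ℤ)
    (hA : ¬ IsNilpotent A) :
    ∃ L : ℝ, Tendsto (fun N : ℕ => (1 / (N : ℝ)) * Real.log ((Dmat (A ^ N) : ℝ)))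
      atTop (nhds L) := by
  have pow_A_ne_zero (N : ℕ) : A ^ N ≠ 0 := fun h ↦ hA ⟨N, h⟩
  refine exists_tendsto_inv_mul_log_of_submultiplicative (fun N ↦ ?_) fun M N ↦ ?_
  · exact_mod_cast Dmat_pos (pow_A_ne_zero N)
  · rw [pow_add]
    exact_mod_cast Dmat_mul_le (A ^ M) (A ^ N)

/-- The algebraic entropy `lim (1/N) log D(A^N)` of the monomial map associated
with a nonsingular integer matrix `A` is well-defined. -/
theorem algebraicEntropy_exists {n : ℕ} (hn : 1 ≤ n) (A : Matrix (Fin n) (Fin n) ℤ)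
    (hA : A.det ≠ 0) :
    ∃ L : ℝ, Tendsto (fun N : ℕ => (1 / (N : ℝ)) * Real.log ((Dmat (A ^ N) : ℝ)))
      atTop (nhds L) := by
  have : Nonempty (Fin n) := ⟨⟨0, hn⟩⟩
  exact algebraicEntropy_exists_general A (not_isNilpotent_of_det_ne_zero hA)
end

section
/- If A is an n×n integer matrix with n ≥ 1, then the spectral radius ρ(A) of A, viewed as a real number, is integral over ℤ (an algebraic integer). (Hence the algebraic entropy of the monomial map associated with a nonsingular integer matrix is the logarithm of an algebraic integer.) -/
open Matrix

/-- The spectral radius of an integer matrix: the maximum of `|λ|` over the complex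
roots `λ` (with multiplicity) of its characteristic polynomial. -/
noncomputable def specRad {n : ℕ} (A : Matrix (Fin n) (Fin n) ℤ) : ℝ :=
  Multiset.fold max 0 (((A.map (Int.cast : ℤ → ℂ)).charpoly.roots).map (fun z : ℂ => ‖z‖))

theorem multiset_fold_mem_cons {α : Type*} {op : α → α → α} [Std.Commutative op]
    [Std.Associative op] (hop : ∀ a b, op a b = a ∨ op a b = b) (b : α) (s : Multiset α) :
    s.fold op b ∈ b ::ₘ s := by
  induction s using Multiset.induction_on with
  | empty => simp
  | cons a s ih =>
    rw [Multiset.fold_cons_left, Multiset.cons_swap]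
    rcases hop a (s.fold op b) with h | h
    · rw [h]
      exact Multiset.mem_cons_self _ _
    · rw [h]
      exact Multiset.mem_cons_of_mem ih

section IsIntegral

variable {R : Type*} [CommRing R]

theorem isIntegral_norm {K : Type*} [RCLike K] [Algebra R ℝ] [Algebra R K] [IsScalarTower R ℝ K]
    {z : K} (hz : IsIntegral R z) : IsIntegral R ‖z‖ := by
  have hconj : IsIntegral R (starRingEnd K z) :=
    hz.map ((RCLike.conjAe (K := K)).restrictScalars R)
  have hsq : IsIntegral R (algebraMap ℝ K ‖z‖ ^ 2) := by
    simpa only [RCLike.mul_conj] using hz.mul hconj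
  exact (isIntegral_algebraMap_iff (algebraMap ℝ K).injective).1 (hsq.of_pow two_pos)

theorem isIntegral_of_isRoot_charpoly_map {S m : Type*} [CommRing S] [Algebra R S] [Fintype m]
    [DecidableEq m] {A : Matrix m m R} {z : S}
    (hz : (A.map (algebraMap R S)).charpoly.IsRoot z) : IsIntegral R z :=
  ⟨A.charpoly, A.charpoly_monic, by
    rwa [A.charpoly_map, Polynomial.IsRoot.def, Polynomial.eval_map] at hz⟩

end IsIntegral

theorem specRad_eq_zero_or_exists_norm_eq {n : ℕ} (A : Matrix (Fin n) (Fin n) ℤ) :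
    specRad A = 0 ∨
      ∃ z : ℂ, (A.map (algebraMap ℤ ℂ)).charpoly.IsRoot z ∧ ‖z‖ = specRad A := by
  refine (Multiset.mem_cons.1 (multiset_fold_mem_cons max_choice _ _)).imp_right fun hmem ↦ ?_
  obtain ⟨z, hz, hnorm⟩ := Multiset.mem_map.1 hmem
  exact ⟨z, Polynomial.isRoot_of_mem_roots hz, hnorm⟩

/-- The spectral radius of an integer matrix is an algebraic integer. -/
theorem specRad_isIntegral {n : ℕ} (hn : 1 ≤ n) (A : Matrix (Fin n) (Fin n) ℤ) :
    IsIntegral ℤ (specRad A) := by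
  obtain hzero | ⟨z, hz, hnorm⟩ := specRad_eq_zero_or_exists_norm_eq A
  · rw [hzero]
    exact isIntegral_zero
  · rw [← hnorm]
    exact isIntegral_norm (isIntegral_of_isRoot_charpoly_map hz)
end

section
/- Let A = (a_{ij}) be an n×n nonsingular integer matrix. Define the (n+1)×(n+1) integer matrix A' by: A'_{ij} = a_{ij} for 1 ≤ i,j ≤ n; A'_{i,n+1} = −Σ_{j=1}^n a_{ij} for 1 ≤ i ≤ n; and A'_{n+1,j} = 0 for all 1 ≤ j ≤ n+1. Define B_{ij} := A'_{ij} − min_{1≤k≤n+1} A'_{kj}. Then: (i) every entry of B is a nonnegative integer; (ii) every column of B contains a zero entry; and (iii) every row sum of B equals D(A). (B is the exponent matrix of the n+1 homogeneous monomials, with no joint common factor, representing the projectivized monomial map of A; its common row sum is the degree of that map, so the degree equals D(A).) -/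
open Matrix Finset

/-- The `(n+1)×(n+1)` matrix `A'`: the upper left `n×n` block is `A`, the last column of
the first `n` rows consists of the negated row sums of `A`, and the last row is zero. -/
def Aext {n : ℕ} (A : Matrix (Fin n) (Fin n) ℤ) :
    Matrix (Fin (n + 1)) (Fin (n + 1)) ℤ := fun i j =>
  if hi : (i : ℕ) < n then
    if hj : (j : ℕ) < n then A ⟨i, hi⟩ ⟨j, hj⟩
    else -(∑ j' : Fin n, A ⟨i, hi⟩ j')
  else 0

/-- `B_{ij} = A'_{ij} − min_k A'_{kj}`: the exponent matrix of the `n+1` homogeneous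
monomials representing the projectivized monomial map of `A`. -/
def Bexp {n : ℕ} (A : Matrix (Fin n) (Fin n) ℤ) :
    Matrix (Fin (n + 1)) (Fin (n + 1)) ℤ := fun i j =>
  Aext A i j - Finset.univ.inf' Finset.univ_nonempty (fun k : Fin (n + 1) => Aext A k j)

/-!
Each row of `A'` sums to zero, so each row of `B` sums to the negative of the sum of the column
minima of `A'`. Because the last row of `A'` is zero, each of these minima is the negative of one of
the terms `max(0, ⋯)` of `D(A)`.
-/

theorem inf'_univ_eq_neg_fold_max_of_last_eq_zero {α : Type*} [AddCommGroup α] [LinearOrder α]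
    [IsOrderedAddMonoid α] {n : ℕ} (f : Fin (n + 1) → α) (hf : f (Fin.last n) = 0) :
    univ.inf' univ_nonempty f = -univ.fold max 0 (fun i : Fin n => -f i.castSucc) := by
  refine eq_of_forall_le_iff fun c => ?_
  calc
    c ≤ univ.inf' univ_nonempty f ↔ (∀ i : Fin n, c ≤ f i.castSucc) ∧ c ≤ 0 := by
      simp only [le_inf'_iff, mem_univ, true_imp_iff, Fin.forall_fin_succ', hf]
    _ ↔ c ≤ -univ.fold max 0 (fun i : Fin n => -f i.castSucc) := by
      simp only [le_neg, fold_max_le, mem_univ, true_imp_iff, neg_le_neg_iff, neg_nonneg, and_comm]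

section ExponentMatrix

variable {n : ℕ} (A : Matrix (Fin n) (Fin n) ℤ)

theorem Aext_castSucc_castSucc (i j : Fin n) : Aext A i.castSucc j.castSucc = A i j := by
  simp [Aext]

theorem Aext_castSucc_last (i : Fin n) : Aext A i.castSucc (Fin.last n) = -∑ j, A i j := by
  simp [Aext]

theorem Aext_last (j : Fin (n + 1)) : Aext A (Fin.last n) j = 0 := by
  simp [Aext]

theorem sum_Aext (i : Fin (n + 1)) : ∑ j, Aext A i j = 0 := by
  cases i using Fin.lastCases with
  | last => simp only [Aext_last, sum_const_zero]
  | cast i =>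
    simp only [Fin.sum_univ_castSucc, Aext_castSucc_castSucc, Aext_castSucc_last, add_neg_cancel]

theorem Dmat_eq_neg_sum_inf'_Aext :
    Dmat A = -∑ j, univ.inf' univ_nonempty (fun k => Aext A k j) := by
  have inf'_eq (j : Fin (n + 1)) :=
    inf'_univ_eq_neg_fold_max_of_last_eq_zero (fun k => Aext A k j) (Aext_last A j)
  simp only [Dmat, inf'_eq, sum_neg_distrib, neg_neg, Fin.sum_univ_castSucc,
    Aext_castSucc_castSucc, Aext_castSucc_last]

theorem Bexp_nonneg (i j : Fin (n + 1)) : 0 ≤ Bexp A i j :=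
  sub_nonneg.2 (inf'_le _ (mem_univ i))

theorem exists_Bexp_eq_zero (j : Fin (n + 1)) : ∃ i, Bexp A i j = 0 := by
  obtain ⟨i, -, hi⟩ := exists_mem_eq_inf' univ_nonempty (fun k => Aext A k j)
  exact ⟨i, sub_eq_zero.2 hi.symm⟩

theorem sum_Bexp (i : Fin (n + 1)) : ∑ j, Bexp A i j = Dmat A := by
  simp only [Bexp, sum_sub_distrib, sum_Aext, zero_sub, Dmat_eq_neg_sum_inf'_Aext]

theorem exponentMatrix_spec_general :
    (∀ i j, 0 ≤ Bexp A i j) ∧ (∀ j, ∃ i, Bexp A i j = 0) ∧ (∀ i, ∑ j, Bexp A i j = Dmat A) :=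
  ⟨Bexp_nonneg A, exists_Bexp_eq_zero A, sum_Bexp A⟩

end ExponentMatrix

/-- The exponent matrix of the projectivization of the monomial map of `A` has
nonnegative entries, a zero in every column (no joint common factor), and all row sums
equal to `D(A)` (the common degree of the monomials). -/
theorem exponentMatrix_spec {n : ℕ} (A : Matrix (Fin n) (Fin n) ℤ) (hA : A.det ≠ 0) :
    (∀ i j, 0 ≤ Bexp A i j) ∧
    (∀ j, ∃ i, Bexp A i j = 0) ∧
    (∀ i, ∑ j : Fin (n + 1), Bexp A i j = Dmat A) :=
  exponentMatrix_spec_general A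
end

section
/- Let B be an (n+1)×(n+1) matrix of nonnegative integers and let f : ℂ^{n+1} → ℂ^{n+1} be the map f(x)_i = Π_{j=1}^{n+1} x_j^{B_{ij}}. If x ∈ ℂ^{n+1} satisfies f^{(k)}(x) ≠ 0 (i.e., the k-th iterate of f at x is not the zero vector) for every 0 ≤ k ≤ 2^{n+1}, then f^{(k)}(x) ≠ 0 for every k ≥ 0. (Hence if the first 2^{n+1} iterates of a point under a projective monomial map on ℂP^n are well-defined, then all iterates are well-defined.) -/
open Matrix Finset Function

/-!
In the absence of zero divisors, a coordinate of `f x` vanishes exactly when one of the variables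
occurring in its monomial does. Hence the support of `f x` depends only on that of `x`, and the
supports of the iterates form an orbit of a self-map of the power set of the coordinates. An orbit
in a set with `2 ^ (n + 1)` elements takes all its values within its first `2 ^ (n + 1)` terms, so
the empty support occurs among those terms if it ever occurs.
-/

theorem exists_lt_iterate_eq_of_card_le {α : Type*} [Finite α] (g : α → α) (a : α) {k : ℕ}
    (hk : Nat.card α ≤ k) : ∃ m < k, g^[m] a = g^[k] a := by
  cases nonempty_fintype α
  rw [Nat.card_eq_fintype_card] at hk
  obtain ⟨p, q, hpq, hcoll⟩ : ∃ p q : Fin (k + 1), p < q ∧ g^[p] a = g^[q] a := by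
    obtain ⟨p, q, hne, hcoll⟩ := Fintype.exists_ne_map_eq_of_card_lt
      (fun i : Fin (k + 1) ↦ g^[i] a) (by simpa using Nat.lt_succ_of_le hk)
    rcases hne.lt_or_gt with hlt | hgt
    exacts [⟨p, q, hlt, hcoll⟩, ⟨q, p, hgt, hcoll.symm⟩]
  refine ⟨k - q + p, by lia, ?_⟩
  calc g^[k - q + p] a = g^[k - q] (g^[p] a) := iterate_add_apply ..
    _ = g^[k - q] (g^[q] a) := by rw [hcoll]
    _ = g^[k - q + q] a := (iterate_add_apply ..).symm
    _ = g^[k] a := by rw [Nat.sub_add_cancel q.is_le]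

theorem exists_lt_card_iterate_eq {α : Type*} [Finite α] (g : α → α) (a : α) (k : ℕ) :
    ∃ m < Nat.card α, g^[m] a = g^[k] a := by
  induction k using Nat.strong_induction_on with
  | _ k ih =>
    rcases lt_or_ge k (Nat.card α) with hk | hk
    · exact ⟨k, hk, rfl⟩
    · obtain ⟨l, hlk, hl⟩ := exists_lt_iterate_eq_of_card_le g a hk
      exact hl ▸ ih l hlk

section MonomialMap

variable {ι κ M₀ : Type*} [CommMonoidWithZero M₀]

/-- The monomial map whose `i`-th coordinate is the monomial with exponent vector `B i`. The
exponent matrix may be rectangular, and the coordinates are taken in any commutative monoid with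
zero, since no addition is involved. -/
def monomialMap [Fintype κ] (B : Matrix ι κ ℕ) (x : κ → M₀) : ι → M₀ :=
  fun i ↦ ∏ j, x j ^ B i j

/-- The action of the monomial map with exponent matrix `B` on supports: `i` is kept when every
variable occurring in the `i`-th monomial lies in `S`. -/
def supportMap (B : Matrix ι κ ℕ) (S : Set κ) : Set ι :=
  {i | support (B i) ⊆ S}

variable [NoZeroDivisors M₀] [Nontrivial M₀]

theorem support_monomialMap [Fintype κ] (B : Matrix ι κ ℕ) (x : κ → M₀) :
    support (monomialMap B x) = supportMap B (support x) := by
  ext i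
  calc ∏ j, x j ^ B i j ≠ 0 ↔ ∀ j, x j ^ B i j ≠ 0 := by simp [Finset.prod_ne_zero_iff]
    _ ↔ ∀ j, B i j ≠ 0 → x j ≠ 0 := forall_congr' fun j ↦ by
      rw [ne_eq, pow_eq_zero_iff']; tauto

variable [Fintype ι]

theorem support_iterate_monomialMap (B : Matrix ι ι ℕ) (x : ι → M₀) (k : ℕ) :
    support ((monomialMap B)^[k] x) = (supportMap B)^[k] (support x) :=
  Semiconj.iterate_right (support_monomialMap B) k x

theorem monomial_iterates_welldefined_general (B : Matrix ι ι ℕ) (x : ι → M₀)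
    (hx : ∀ k < 2 ^ Fintype.card ι, (monomialMap B)^[k] x ≠ 0) (k : ℕ) :
    (monomialMap B)^[k] x ≠ 0 := by
  obtain ⟨m, hm, hmk⟩ := exists_lt_card_iterate_eq (supportMap B) (support x) k
  rw [Nat.card_eq_fintype_card, Fintype.card_set] at hm
  have hsupp : support ((monomialMap B)^[m] x) = support ((monomialMap B)^[k] x) := by
    simpa only [support_iterate_monomialMap] using hmk
  rw [← support_nonempty_iff, ← hsupp, support_nonempty_iff]
  exact hx m hm

end MonomialMap

/-- If the first `2^{n+1}` iterates of a point under a homogeneous monomial map on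
`ℂ^{n+1}` are nonzero (so the corresponding iterates of the projective monomial map
on `ℂP^n` are well-defined), then all iterates are nonzero. -/
theorem monomial_iterates_welldefined {n : ℕ}
    (B : Matrix (Fin (n + 1)) (Fin (n + 1)) ℕ)
    (f : (Fin (n + 1) → ℂ) → Fin (n + 1) → ℂ)
    (hf : ∀ x i, f x i = ∏ j : Fin (n + 1), x j ^ (B i j))
    (x : Fin (n + 1) → ℂ)
    (hx : ∀ k ≤ 2 ^ (n + 1), f^[k] x ≠ 0) :
    ∀ k : ℕ, f^[k] x ≠ 0 := by
  obtain rfl : f = monomialMap B := funext₂ hf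
  exact monomial_iterates_welldefined_general B x fun k hk ↦ hx k (by simpa using hk.le)
end

section
/- Let A be the 3×3 integer matrix with rows (−1,1,0), (−1,0,1), (1,0,0), and let d_N := D(A^N) for N ≥ 0. Then the sequence (d_N)_{N≥0} does not satisfy any linear recurrence with constant coefficients: there is no k ≥ 1 and real numbers c_1,…,c_k such that d_{N+k} = c_1 d_{N+k−1} + ⋯ + c_k d_N for all N ≥ 0. -/
open Matrix Finset

/-!
At each matrix `D` takes the value of one of finitely many linear functionals. Colour `N` by a
functional `φ` with `d_N = φ(A^N)`; van der Waerden's theorem gives arbitrarily long monochromatic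
arithmetic progressions. If `d` satisfied a linear recurrence, so would `d_N - φ(A^N)`, and a
solution vanishing on a sufficiently long progression vanishes on its infinite extension: there
would be `q > 0`, `r` and `φ` with `d_{qn+r} = φ(A^{qn+r})` for all `n`.

The left side is a positive integer, while the right side oscillates. The eigenvalues of `A` are
`α ∈ (0, 1)` and a conjugate pair `ζ`, `ζ̄` outside the closed unit disc. No power `ζ ^ q` with
`q > 0` is real: a field embedding taking `ζ` to `α` would carry `ζ ^ q = ζ̄ ^ q` to a second
eigenvalue of absolute value `α`. After replacing `q` by a multiple, `ω = ζ ^ q` has nonpositive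
real part, so for `s_n = φ(A^{qn+r})` the combination `s_{n+2} - 2 Re(ω) s_{n+1} + |ω|² s_n` has
nonnegative coefficients; it is a multiple of `α^{qn}`, hence tends to `0`, and `s_n ≥ 1` is
impossible.
-/

namespace DegSeq

open Polynomial

section LinearSelection

variable {R M ι : Type*} [CommSemiring R] [AddCommMonoid M] [Module R M]

/-- `f` is a selection of finitely many linear functionals: at each point it takes the value of one
of them. This is all that is retained of the piecewise linearity of `Dmat`; the shape of the pieces
is irrelevant. -/
def IsLinearSelection (f : M → R) : Prop :=
  ∃ S : Set (M →ₗ[R] R), S.Finite ∧ ∀ x, ∃ φ ∈ S, f x = φ x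

lemma isLinearSelection_linearMap (φ : M →ₗ[R] R) : IsLinearSelection φ :=
  ⟨{φ}, Set.finite_singleton φ, fun _ => ⟨φ, rfl, rfl⟩⟩

lemma isLinearSelection_zero : IsLinearSelection fun _ : M => (0 : R) :=
  isLinearSelection_linearMap 0

protected lemma IsLinearSelection.add {f g : M → R} (hf : IsLinearSelection f)
    (hg : IsLinearSelection g) :
    IsLinearSelection fun x => f x + g x := by
  obtain ⟨S, hS, hfS⟩ := hf
  obtain ⟨T, hT, hgT⟩ := hg
  refine ⟨Set.image2 (· + ·) S T, hS.image2 _ hT, fun x => ?_⟩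
  obtain ⟨φ, hφ, hfx⟩ := hfS x
  obtain ⟨ψ, hψ, hgx⟩ := hgT x
  exact ⟨φ + ψ, Set.mem_image2_of_mem hφ hψ, congrArg₂ (· + ·) hfx hgx⟩

protected lemma IsLinearSelection.sum {s : Finset ι} {f : ι → M → R}
    (hf : ∀ i, IsLinearSelection (f i)) :
    IsLinearSelection fun x => ∑ i ∈ s, f i x := by
  classical
  induction s using Finset.induction_on with
  | empty => simpa only [sum_empty] using isLinearSelection_zero
  | insert i s hi ih => simpa only [sum_insert hi] using (hf i).add ih

variable [LinearOrder R]

protected lemma IsLinearSelection.max {f g : M → R} (hf : IsLinearSelection f)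
    (hg : IsLinearSelection g) :
    IsLinearSelection fun x => max (f x) (g x) := by
  obtain ⟨S, hS, hfS⟩ := hf
  obtain ⟨T, hT, hgT⟩ := hg
  refine ⟨S ∪ T, hS.union hT, fun x => ?_⟩
  rcases max_choice (f x) (g x) with hmax | hmax
  · obtain ⟨φ, hφ, hfx⟩ := hfS x
    exact ⟨φ, Or.inl hφ, hmax.trans hfx⟩
  · obtain ⟨ψ, hψ, hgx⟩ := hgT x
    exact ⟨ψ, Or.inr hψ, hmax.trans hgx⟩

lemma IsLinearSelection.fold_max {s : Finset ι} {f : ι → M → R}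
    (hf : ∀ i, IsLinearSelection (f i)) :
    IsLinearSelection fun x => s.fold max 0 fun i => f i x := by
  classical
  induction s using Finset.induction_on with
  | empty => simpa only [fold_empty] using isLinearSelection_zero
  | insert i s hi ih => simpa only [fold_insert hi] using (hf i).max ih

end LinearSelection

lemma isLinearSelection_Dmat (n : ℕ) :
    IsLinearSelection (Dmat : Matrix (Fin n) (Fin n) ℤ → ℤ) := by
  have entry (i j : Fin n) : IsLinearSelection fun M : Matrix (Fin n) (Fin n) ℤ => M i j :=
    isLinearSelection_linearMap (entryLinearMap ℤ ℤ i j)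
  have neg_entry (i j : Fin n) : IsLinearSelection fun M : Matrix (Fin n) (Fin n) ℤ => -M i j :=
    isLinearSelection_linearMap (-entryLinearMap ℤ ℤ i j)
  exact (IsLinearSelection.sum fun j => .fold_max fun i => neg_entry i j).add
    (.fold_max fun i => .sum fun j => entry i j)

lemma Dmat_pos {n : ℕ} {M : Matrix (Fin n) (Fin n) ℤ} (hM : M ≠ 0) : 0 < Dmat M := by
  have fold_nonneg (f : Fin n → ℤ) : 0 ≤ univ.fold max 0 f := (le_fold_max _).2 (.inl le_rfl)
  have le_fold (f : Fin n → ℤ) (i : Fin n) : f i ≤ univ.fold max 0 f :=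
    (le_fold_max _).2 (.inr ⟨i, mem_univ i, le_rfl⟩)
  have col_sum_nonneg : 0 ≤ ∑ j, univ.fold max 0 fun i => -M i j :=
    sum_nonneg fun j _ => fold_nonneg _
  by_contra! hD
  rw [Dmat] at hD
  have col_fold_eq_zero (j : Fin n) : univ.fold max 0 (fun i => -M i j) = 0 :=
    (sum_eq_zero_iff_of_nonneg fun j _ => fold_nonneg fun i => -M i j).1
      (by linarith [fold_nonneg fun i => ∑ j, M i j]) j (mem_univ j)
  have entry_nonneg (i j : Fin n) : 0 ≤ M i j := by
    linarith [le_fold (fun i => -M i j) i, col_fold_eq_zero j]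
  have row_sum_eq_zero (i : Fin n) : ∑ j, M i j = 0 :=
    le_antisymm (by linarith [le_fold (fun i => ∑ j, M i j) i])
      (sum_nonneg fun j _ => entry_nonneg i j)
  refine hM (Matrix.ext fun i j => ?_)
  exact (sum_eq_zero_iff_of_nonneg fun j _ => entry_nonneg i j).1 (row_sum_eq_zero i) j (mem_univ j)

section Shift

variable {R : Type*} [CommSemiring R]

/-- The left shift `u ↦ (u 1, u 2, …)` on sequences, through which polynomials act on sequences. -/
def shift (R : Type*) [CommSemiring R] : Module.End R (ℕ → R) :=
  LinearMap.funLeft R R (· + 1)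

lemma shift_apply (u : ℕ → R) (n : ℕ) : shift R u n = u (n + 1) := rfl

lemma shift_pow_apply (m : ℕ) (u : ℕ → R) (n : ℕ) : (shift R ^ m) u n = u (n + m) := by
  induction m generalizing n with
  | zero => simp
  | succ m ih =>
    rw [pow_succ', Module.End.mul_apply, shift_apply, ih, add_right_comm, add_assoc]

lemma aeval_shift_comp_mul_add (p : R[X]) (u : ℕ → R) (q r n : ℕ) :
    aeval (shift R) p (fun k => u (q * k + r)) n =
      aeval (shift R) (expand R q p) u (q * n + r) := by
  rw [expand_aeval, aeval_eq_sum_range, aeval_eq_sum_range]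
  simp only [LinearMap.sum_apply, LinearMap.smul_apply, Finset.sum_apply, Pi.smul_apply, ← pow_mul,
    shift_pow_apply]
  refine Finset.sum_congr rfl fun i _ => ?_
  ring_nf

end Shift

lemma isSolution_iff_aeval_shift_charPoly {R : Type*} [CommRing R] (E : LinearRecurrence R)
    (u : ℕ → R) : E.IsSolution u ↔ aeval (shift R) E.charPoly u = 0 := by
  simp [LinearRecurrence.IsSolution, LinearRecurrence.charPoly, funext_iff, aeval_monomial,
    shift_pow_apply, sub_eq_zero]

lemma shift_mem_solSpace {R : Type*} [CommSemiring R] (E : LinearRecurrence R) {u : ℕ → R}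
    (hu : u ∈ E.solSpace) : shift R u ∈ E.solSpace := fun n => by
  simpa only [shift_apply, add_right_comm] using hu (n + 1)

lemma dual_pow_apply_eq_zero {R V : Type*} [CommRing R] [AddCommGroup V] [Module R V]
    [Module.Free R V] [Module.Finite R V] (T : Module.End R V) (L : Module.Dual R V) (x : V)
    (h : ∀ n < Module.finrank R V, L ((T ^ n) x) = 0) (n : ℕ) : L ((T ^ n) x) = 0 := by
  nontriviality V
  have := Module.nontrivial R V
  have charpoly_ne_one : T.charpoly ≠ 1 := fun h1 =>
    ((Module.finrank_pos_iff_of_free R V).2 ‹_›).ne'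
      (by rw [← T.charpoly_natDegree, h1, natDegree_one])
  have degree_lt : (X ^ n %ₘ T.charpoly).natDegree < Module.finrank R V :=
    (natDegree_modByMonic_lt _ T.charpoly_monic charpoly_ne_one).trans_eq T.charpoly_natDegree
  rw [T.pow_eq_aeval_mod_charpoly, aeval_eq_sum_range' degree_lt, LinearMap.sum_apply, map_sum]
  refine Finset.sum_eq_zero fun i hi => ?_
  rw [LinearMap.smul_apply, map_smul, h i (Finset.mem_range.1 hi), smul_zero]

lemma eq_zero_on_progression {K : Type*} [Field K] {W : Submodule K (ℕ → K)}
    [FiniteDimensional K W] (hW : W ≤ W.comap (shift K)) {u : ℕ → K} (hu : u ∈ W) {q r : ℕ}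
    (h : ∀ n < Module.finrank K W, u (q * n + r) = 0) (n : ℕ) : u (q * n + r) = 0 := by
  have hWq : ∀ v ∈ W, (shift K ^ q) v ∈ W := Module.End.pow_apply_mem_of_forall_mem q hW
  let evalAt : Module.Dual K W := LinearMap.proj r ∘ₗ W.subtype
  have orbit (n : ℕ) : evalAt (((shift K ^ q).restrict hWq ^ n) ⟨u, hu⟩) = u (q * n + r) := by
    rw [Module.End.pow_restrict n hWq]
    simp [evalAt, ← pow_mul, shift_pow_apply, add_comm]
  rw [← orbit]
  exact dual_pow_apply_eq_zero _ evalAt _ (fun n hn => by rw [orbit, h n hn]) n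

theorem exists_eq_on_progression {K ι : Type*} [Field K] [Finite ι] {E F : LinearRecurrence K}
    {f : ℕ → K} (hf : E.IsSolution f) {g : ι → ℕ → K} (hg : ∀ t, F.IsSolution (g t))
    (hfg : ∀ n, ∃ t, f n = g t n) :
    ∃ q > 0, ∃ r t, ∀ n, f (q * n + r) = g t (q * n + r) := by
  let W := E.solSpace ⊔ F.solSpace
  have : FiniteDimensional K E.solSpace := E.basis.finiteDimensional_of_finite
  have : FiniteDimensional K F.solSpace := F.basis.finiteDimensional_of_finite
  have hW : W ≤ W.comap (shift K) :=
    sup_le (fun _ hu => Submodule.mem_sup_left (shift_mem_solSpace E hu))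
      (fun _ hu => Submodule.mem_sup_right (shift_mem_solSpace F hu))
  choose t ht using hfg
  obtain ⟨q, hq, r, t₀, hmono⟩ :=
    Combinatorics.exists_mono_homothetic_copy (range (Module.finrank K W)) t
  refine ⟨q, hq, r, t₀, fun n => sub_eq_zero.1 ?_⟩
  have hsub : f - g t₀ ∈ W :=
    W.sub_mem (Submodule.mem_sup_left hf) (Submodule.mem_sup_right (hg t₀))
  refine eq_zero_on_progression hW hsub (fun m hm => ?_) n
  rw [Pi.sub_apply, ht, ← smul_eq_mul, hmono m (mem_range.2 hm), sub_self]

section Oscillation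

/-- The real quadratic polynomial whose complex roots are `z` and its conjugate. -/
noncomputable def conjQuadratic (z : ℂ) : ℝ[X] := X ^ 2 - C (2 * z.re) * X + C (‖z‖ ^ 2)

open ComplexConjugate in
lemma aeval_conjQuadratic (z w : ℂ) : aeval w (conjQuadratic z) = (w - z) * (w - conj z) := by
  have hsum : z + conj z = 2 * z.re := by simpa using Complex.add_conj z
  have hprod : z * conj z = ‖z‖ ^ 2 := Complex.mul_conj' z
  simp only [conjQuadratic, map_add, map_sub, map_mul, map_pow, aeval_X, aeval_C,
    Complex.coe_algebraMap, Complex.ofReal_ofNat]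
  linear_combination w * hsum - hprod

lemma conjQuadratic_dvd_expand {z : ℂ} (hz : z.im ≠ 0) (q : ℕ) :
    conjQuadratic z ∣ expand ℝ q (conjQuadratic (z ^ q)) :=
  quadratic_dvd_of_aeval_eq_zero_im_ne_zero _
    (by rw [expand_aeval, aeval_conjQuadratic, sub_self, zero_mul]) hz

lemma X_sub_C_dvd_expand {R : Type*} [CommRing R] (a : R) (q : ℕ) :
    X - C a ∣ expand R q (X - C (a ^ q)) := by
  rw [map_sub, expand_X, expand_C, C_pow]
  exact sub_dvd_pow_sub_pow X (C a) q

lemma exists_pow_re_nonpos {z : ℂ} (hz : z.arg ≠ 0) : ∃ m ≠ 0, (z ^ m).re ≤ 0 := by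
  have harg : 0 < |z.arg| := abs_pos.2 hz
  let m := ⌈Real.pi / 2 / |z.arg|⌉₊
  have lower : Real.pi / 2 ≤ m * |z.arg| := (div_le_iff₀ harg).1 (Nat.le_ceil _)
  have upper : m * |z.arg| ≤ Real.pi + Real.pi / 2 := by
    have hm : (m : ℝ) < Real.pi / 2 / |z.arg| + 1 := Nat.ceil_lt_add_one (by positivity)
    calc m * |z.arg| ≤ (Real.pi / 2 / |z.arg| + 1) * |z.arg| := by gcongr
      _ = |z.arg| + Real.pi / 2 := by field_simp; ring
      _ ≤ Real.pi + Real.pi / 2 := by gcongr; exact Complex.abs_arg_le_pi z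
  have re_pow : (z ^ m).re = ‖z‖ ^ m * Real.cos (m * |z.arg|) := by
    have polar : z ^ m = (‖z‖ ^ m : ℝ) * Complex.exp ((m * z.arg : ℝ) * Complex.I) := by
      conv_lhs => rw [← Complex.norm_mul_exp_arg_mul_I z, mul_pow, ← Complex.exp_nat_mul]
      push_cast
      ring_nf
    rw [polar, Complex.re_ofReal_mul, Complex.exp_ofReal_mul_I_re, ← Real.cos_abs, abs_mul,
      Nat.abs_cast]
  refine ⟨m, (Nat.ceil_pos.2 (by positivity)).ne', ?_⟩
  rw [re_pow]
  exact mul_nonpos_of_nonneg_of_nonpos (by positivity)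
    (Real.cos_nonpos_of_pi_div_two_le_of_le lower upper)

lemma exists_lt_of_re_nonpos {s : ℕ → ℝ} {β : ℝ} {ω : ℂ}
    (hs : aeval (shift ℝ) ((X - C β) * conjQuadratic ω) s = 0) (hβ : |β| < 1) (hω : ω ≠ 0)
    (hre : ω.re ≤ 0) {ε : ℝ} (hε : 0 < ε) : ∃ n, s n < ε := by
  let u := aeval (shift ℝ) (conjQuadratic ω) s
  have hu (n : ℕ) : u n = s (n + 2) - 2 * ω.re * s (n + 1) + ‖ω‖ ^ 2 * s n := by
    simp only [u, conjQuadratic, map_add, map_sub, map_mul, map_pow (aeval _), aeval_X, aeval_C,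
      LinearMap.add_apply, LinearMap.sub_apply, Module.End.mul_apply, Module.algebraMap_end_apply,
      Pi.add_apply, Pi.sub_apply, Pi.smul_apply, smul_eq_mul, shift_pow_apply, shift_apply,
      mul_assoc]
  have u_geometric (n : ℕ) : u n = β ^ n * u 0 := by
    have step (n : ℕ) : u (n + 1) = β * u n := by
      simpa [u, shift_apply, sub_eq_zero] using congrFun hs n
    induction n with
    | zero => simp
    | succ n ih => rw [step, ih, pow_succ', mul_assoc]
  have u_tendsto : Filter.Tendsto u Filter.atTop (nhds 0) := by
    rw [funext u_geometric]
    simpa using (tendsto_pow_atTop_nhds_zero_of_abs_lt_one hβ).mul_const (u 0)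
  by_contra! hs_ge
  have u_ge (n : ℕ) : ‖ω‖ ^ 2 * ε ≤ u n := by
    have h₀ : ‖ω‖ ^ 2 * ε ≤ ‖ω‖ ^ 2 * s n := by gcongr; exact hs_ge n
    have h₁ : 0 ≤ -ω.re * s (n + 1) := mul_nonneg (neg_nonneg.2 hre) (hε.le.trans (hs_ge _))
    linarith [hu n, hs_ge (n + 2)]
  have : ‖ω‖ ^ 2 * ε ≤ 0 := ge_of_tendsto' u_tendsto u_ge
  have : 0 < ‖ω‖ ^ 2 * ε := by positivity
  linarith

theorem exists_lt_on_progression {s : ℕ → ℝ} {α : ℝ} {ζ : ℂ}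
    (hs : aeval (shift ℝ) ((X - C α) * conjQuadratic ζ) s = 0) (hα : |α| < 1) {q : ℕ}
    (hζq : (ζ ^ q).im ≠ 0) (r : ℕ) {ε : ℝ} (hε : 0 < ε) : ∃ n, s (q * n + r) < ε := by
  have hq : q ≠ 0 := by rintro rfl; simp at hζq
  have hζ : ζ.im ≠ 0 := fun h => hζq <| by
    rw [← Complex.conj_eq_iff_im] at h ⊢
    rw [map_pow, h]
  have hζ0 : ζ ≠ 0 := by rintro rfl; simp at hζ
  obtain ⟨m, hm, hre⟩ := exists_pow_re_nonpos fun harg => hζq (Complex.arg_eq_zero_iff.1 harg).2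
  rw [← pow_mul] at hre
  have hdvd : (X - C α) * conjQuadratic ζ ∣
      expand ℝ (q * m) ((X - C (α ^ (q * m))) * conjQuadratic (ζ ^ (q * m))) := by
    rw [map_mul]
    exact mul_dvd_mul (X_sub_C_dvd_expand α _) (conjQuadratic_dvd_expand hζ _)
  have hexpand : aeval (shift ℝ)
      (expand ℝ (q * m) ((X - C (α ^ (q * m))) * conjQuadratic (ζ ^ (q * m)))) s = 0 := by
    obtain ⟨p, hp⟩ := hdvd
    rw [hp, mul_comm, map_mul, Module.End.mul_apply, hs, map_zero]
  have hsub : aeval (shift ℝ) ((X - C (α ^ (q * m))) * conjQuadratic (ζ ^ (q * m)))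
      (fun n => s (q * m * n + r)) = 0 :=
    funext fun n => by rw [aeval_shift_comp_mul_add, hexpand]; rfl
  obtain ⟨n, hn⟩ := exists_lt_of_re_nonpos hsub
    (by rw [abs_pow]; exact pow_lt_one₀ (abs_nonneg α) hα (mul_ne_zero hq hm))
    (pow_ne_zero _ hζ0) hre hε
  exact ⟨m * n, by rwa [← mul_assoc]⟩

end Oscillation

section Roots

lemma exists_cubic_eq_mul_conjQuadratic : ∃ (α : ℝ) (ζ : ℂ), 0 < α ∧ α < 1 ∧ 1 < ‖ζ‖ ∧ ζ.im ≠ 0 ∧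
    (X ^ 3 + X ^ 2 + X - 1 : ℝ[X]) = (X - C α) * conjQuadratic ζ := by
  obtain ⟨α, ⟨hα0, hα1⟩, hα⟩ : ∃ α ∈ Set.Ioo (0 : ℝ) 1, α ^ 3 + α ^ 2 + α - 1 = 0 :=
    intermediate_value_Ioo zero_le_one (f := fun t : ℝ => t ^ 3 + t ^ 2 + t - 1) (by fun_prop)
      (by norm_num)
  have hdisc : 0 < 1 + α + α ^ 2 - ((1 + α) / 2) ^ 2 := by nlinarith
  let ζ : ℂ := ⟨-((1 + α) / 2), √(1 + α + α ^ 2 - ((1 + α) / 2) ^ 2)⟩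
  have hnorm : ‖ζ‖ ^ 2 = 1 + α + α ^ 2 := by
    rw [← Complex.normSq_eq_norm_sq, Complex.normSq_mk, Real.mul_self_sqrt hdisc.le]
    ring
  refine ⟨α, ζ, hα0, hα1, ?_, (Real.sqrt_pos.2 hdisc).ne', ?_⟩
  · exact (one_lt_sq_iff₀ (norm_nonneg ζ)).1 (by rw [hnorm]; nlinarith)
  · have htrace : 2 * ζ.re = -(1 + α) := by simp only [ζ]; ring
    have hCα : (C α ^ 3 + C α ^ 2 + C α - 1 : ℝ[X]) = 0 := by
      simpa only [map_add, map_sub, map_pow, map_one, map_zero] using congrArg C hα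
    simp only [conjQuadratic, hnorm, htrace, map_neg, map_add, map_pow, map_one]
    linear_combination hCα

lemma irreducible_cubic : Irreducible (X ^ 3 + X ^ 2 + X - 1 : ℚ[X]) := by
  have hdeg : (X ^ 3 + X ^ 2 + X - 1 : ℤ[X]).natDegree = 3 := by compute_degree!
  have hmonic : (X ^ 3 + X ^ 2 + X - 1 : ℤ[X]).Monic := by monicity!
  have no_root (n : ℤ) : n ^ 3 + n ^ 2 + n - 1 ≠ 0 := fun h => by
    have hunit : n * (n ^ 2 + n + 1) = 1 := by linarith
    rcases Int.isUnit_iff.1 (IsUnit.of_mul_eq_one _ hunit) with rfl | rfl <;> norm_num at hunit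
  have hint : Irreducible (X ^ 3 + X ^ 2 + X - 1 : ℤ[X]) := by
    rw [hmonic.irreducible_iff_roots_eq_zero_of_degree_le_three (by omega) (by omega)]
    refine Multiset.eq_zero_of_forall_notMem fun n hn => no_root n ?_
    simpa using isRoot_of_mem_roots hn
  simpa using (hmonic.irreducible_iff_irreducible_map_fraction_map (K := ℚ)).1 hint

lemma eq_of_pow_eq_pow_of_irreducible {F K : Type*} [Field F] [Field K] [Algebra F K]
    [IsAlgClosed K] {p : F[X]} (hp : Irreducible p) {q : ℕ} {a x y : K} (ha : aeval a p = 0)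
    (ha_unique : ∀ w, aeval w p = 0 → w ^ q = a ^ q → w = a) (hx : aeval x p = 0)
    (hy : aeval y p = 0) (hxy : x ^ q = y ^ q) : x = y := by
  have integral_of_root {s : K} (hs : aeval s p = 0) : IsIntegral F s :=
    IsAlgebraic.isIntegral ⟨p, hp.ne_zero, hs⟩
  have ha_minpoly : aeval a (minpoly F x) = 0 := by
    rw [← minpoly.eq_of_irreducible hp hx, map_mul, ha, zero_mul]
  let S : Set K := {x, y}
  have hS : ∀ s ∈ S, IsIntegral F s ∧ ((minpoly F s).map (algebraMap F K)).Splits := by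
    rintro s (rfl | rfl)
    · exact ⟨integral_of_root hx, IsAlgClosed.splits _⟩
    · exact ⟨integral_of_root hy, IsAlgClosed.splits _⟩
  let xS : IntermediateField.adjoin F S := ⟨x, IntermediateField.subset_adjoin F S (.inl rfl)⟩
  let yS : IntermediateField.adjoin F S := ⟨y, IntermediateField.subset_adjoin F S (.inr rfl)⟩
  obtain ⟨φ, hφ⟩ : ∃ φ : IntermediateField.adjoin F S →ₐ[F] K, φ xS = a :=
    IntermediateField.exists_algHom_adjoin_of_splits_of_aeval hS xS.2 ha_minpoly
  have hyS_root : aeval yS p = 0 :=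
    Subtype.ext ((aeval_algHom_apply (IntermediateField.adjoin F S).val yS p).symm.trans hy)
  have hyS_pow : yS ^ q = xS ^ q := Subtype.ext hxy.symm
  have hφy : φ yS = a := ha_unique _ (by rw [aeval_algHom_apply, hyS_root, map_zero])
    (by rw [← map_pow, hyS_pow, map_pow, hφ])
  exact congrArg Subtype.val (φ.injective (hφ.trans hφy.symm))

open ComplexConjugate in
lemma im_pow_ne_zero_of_cubic_eq {α : ℝ} {ζ : ℂ} (hα0 : 0 < α) (hα1 : α < 1) (hζ1 : 1 < ‖ζ‖)
    (hζ : ζ.im ≠ 0) (hfac : (X ^ 3 + X ^ 2 + X - 1 : ℝ[X]) = (X - C α) * conjQuadratic ζ) {q : ℕ}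
    (hq : q ≠ 0) : (ζ ^ q).im ≠ 0 := by
  have aeval_cubic (w : ℂ) : aeval w (X ^ 3 + X ^ 2 + X - 1 : ℚ[X]) =
      (w - α) * ((w - ζ) * (w - conj ζ)) := by
    simpa [aeval_conjQuadratic] using congrArg (aeval w) hfac
  have α_unique (w : ℂ) (hw : aeval w (X ^ 3 + X ^ 2 + X - 1 : ℚ[X]) = 0)
      (hwq : w ^ q = (α : ℂ) ^ q) : w = α := by
    have hnorm : ‖w‖ = α := by
      refine (pow_left_inj₀ (norm_nonneg w) hα0.le hq).1 ?_
      rw [← norm_pow, hwq, norm_pow, Complex.norm_of_nonneg hα0.le]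
    simp only [aeval_cubic, mul_eq_zero, sub_eq_zero] at hw
    rcases hw with rfl | rfl | rfl
    · rfl
    · linarith
    · rw [Complex.norm_conj] at hnorm
      linarith
  intro him
  have hpow : ζ ^ q = conj ζ ^ q := by rw [← map_pow, Complex.conj_eq_iff_im.2 him]
  have hconj : ζ = conj ζ := eq_of_pow_eq_pow_of_irreducible irreducible_cubic
    (by simp [aeval_cubic]) α_unique (by simp [aeval_cubic]) (by simp [aeval_cubic]) hpow
  exact hζ (Complex.conj_eq_iff_im.1 hconj.symm)

end Roots

/-- The matrix of the monomial map `(x, y, z) ↦ (y / x, z / x, x)`. -/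
abbrev expMatrix : Matrix (Fin 3) (Fin 3) ℤ := !![-1, 1, 0; -1, 0, 1; 1, 0, 0]

/-- The recurrence `u (n + 3) = u n - u (n + 1) - u (n + 2)` with characteristic polynomial
`X ^ 3 + X ^ 2 + X - 1`; it is the Tribonacci recurrence run backwards. -/
def revTribonacci (R : Type*) [CommRing R] : LinearRecurrence R := ⟨3, ![1, -1, -1]⟩

lemma charPoly_revTribonacci (R : Type*) [CommRing R] :
    (revTribonacci R).charPoly = X ^ 3 + X ^ 2 + X - 1 := by
  change monomial 3 1 - ∑ i : Fin 3, monomial (i : ℕ) (![1, -1, -1] i) = _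
  simp only [Fin.sum_univ_three, ← C_mul_X_pow_eq_monomial, map_one, map_neg, one_mul, mul_one,
    neg_mul, pow_zero, pow_one, cons_val_zero, cons_val_one, Matrix.cons_val, Fin.coe_ofNat_eq_mod,
    Nat.zero_mod, Nat.one_mod, Nat.mod_succ]
  ring

lemma isSolution_revTribonacci (R : Type*) [CommRing R]
    (φ : Matrix (Fin 3) (Fin 3) ℤ →ₗ[ℤ] ℤ) :
    (revTribonacci R).IsSolution fun N => (φ (expMatrix ^ N) : R) := by
  intro N
  have hcube : expMatrix ^ 3 = 1 - expMatrix - expMatrix ^ 2 := by decide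
  have hpow : expMatrix ^ (N + 3) = expMatrix ^ N - expMatrix ^ (N + 1) - expMatrix ^ (N + 2) := by
    rw [pow_add, hcube, mul_sub, mul_sub, mul_one, ← pow_succ, ← pow_add]
  change (φ (expMatrix ^ (N + 3)) : R) =
    ∑ i : Fin 3, ![1, -1, -1] i * (φ (expMatrix ^ (N + (i : ℕ))) : R)
  simp only [hpow, map_sub, Int.cast_sub, Fin.sum_univ_three, add_zero, one_mul, neg_mul,
    cons_val_zero, cons_val_one, Matrix.cons_val, Fin.coe_ofNat_eq_mod, Nat.zero_mod, Nat.one_mod,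
    Nat.mod_succ]
  ring

theorem exists_map_pow_nonpos (φ : Matrix (Fin 3) (Fin 3) ℤ →ₗ[ℤ] ℤ) {q : ℕ} (hq : q ≠ 0) (r : ℕ) :
    ∃ n, φ (expMatrix ^ (q * n + r)) ≤ 0 := by
  obtain ⟨α, ζ, hα0, hα1, hζ1, hζ, hfac⟩ := exists_cubic_eq_mul_conjQuadratic
  have hs : aeval (shift ℝ) ((X - C α) * conjQuadratic ζ)
      (fun N => (φ (expMatrix ^ N) : ℝ)) = 0 := by
    rw [← hfac, ← charPoly_revTribonacci, ← isSolution_iff_aeval_shift_charPoly]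
    exact isSolution_revTribonacci ℝ φ
  obtain ⟨n, hn⟩ := exists_lt_on_progression hs (abs_lt.2 ⟨by linarith, hα1⟩)
    (im_pow_ne_zero_of_cubic_eq hα0 hα1 hζ1 hζ hfac hq) r one_pos
  exact ⟨n, Int.lt_add_one_iff.1 (by exact_mod_cast hn)⟩

lemma expMatrix_pow_ne_zero (N : ℕ) : expMatrix ^ N ≠ 0 := by
  have hunit : IsUnit expMatrix :=
    (Matrix.isUnit_iff_isUnit_det _).2 (by simp [Matrix.det_fin_three])
  exact (hunit.pow N).ne_zero

lemma isSolution_rev {R : Type*} [CommSemiring R] {k : ℕ} {c : Fin k → R} {u : ℕ → R}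
    (hu : ∀ N, u (N + k) = ∑ i : Fin k, c i * u (N + k - 1 - i)) :
    LinearRecurrence.IsSolution ⟨k, fun i => c i.rev⟩ u := fun N => by
  refine (hu N).trans (Fintype.sum_equiv Fin.revPerm _ _ fun i => ?_)
  have hidx : N + k - 1 - (i : ℕ) = N + (k - (i + 1)) := by omega
  simp only [Fin.revPerm_apply, Fin.rev_rev, Fin.val_rev, hidx]

end DegSeq

theorem degSeq_no_linear_recurrence_general {K : Type*} [Field K] [CharZero K]
    (E : LinearRecurrence K) :
    ¬ E.IsSolution fun N => (Dmat (DegSeq.expMatrix ^ N) : K) := by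
  intro hE
  obtain ⟨S, hS, hDmat⟩ := DegSeq.isLinearSelection_Dmat 3
  have : Finite S := hS.to_subtype
  obtain ⟨q, hq, r, φ, heq⟩ := DegSeq.exists_eq_on_progression hE
    (g := fun (φ : S) N => (φ.1 (DegSeq.expMatrix ^ N) : K))
    (fun φ => DegSeq.isSolution_revTribonacci K φ) fun N => by
      obtain ⟨φ, hφ, hN⟩ := hDmat (DegSeq.expMatrix ^ N)
      exact ⟨⟨φ, hφ⟩, congrArg Int.cast hN⟩
  obtain ⟨n, hn⟩ := DegSeq.exists_map_pow_nonpos φ.1 hq.ne' r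
  have hpos := DegSeq.Dmat_pos (DegSeq.expMatrix_pow_ne_zero (q * n + r))
  rw [Int.cast_injective (heq n)] at hpos
  exact hpos.not_ge hn

/-- The degree sequence of the iterates of the monomial map
`(x,y,z) ↦ (y/x, z/x, x)` does not satisfy any linear recurrence with constant
coefficients. -/
theorem degSeq_no_linear_recurrence :
    ¬ ∃ k : ℕ, 1 ≤ k ∧ ∃ c : Fin k → ℝ,
      ∀ N : ℕ,
        ((Dmat ((!![-1, 1, 0; -1, 0, 1; 1, 0, 0] : Matrix (Fin 3) (Fin 3) ℤ) ^ (N + k)) : ℝ)) =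
          ∑ i : Fin k, c i *
            ((Dmat ((!![-1, 1, 0; -1, 0, 1; 1, 0, 0] : Matrix (Fin 3) (Fin 3) ℤ) ^
              (N + k - 1 - (i : ℕ))) : ℝ)) := by
  rintro ⟨k, -, c, hrec⟩
  exact degSeq_no_linear_recurrence_general _ (DegSeq.isSolution_rev hrec)
end

section
/- Let β be a complex root of the polynomial t³+t²+t−1 with nonzero imaginary part. Then for every integer m ≥ 1, β^m is not a real number. (Equivalently, writing β = r e^{iθ}, the angle θ is incommensurable with 2π.) -/
/-!
Let `β` be a nonreal root of an irreducible polynomial `P` of odd prime degree `p` over a subfield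
`K` of `ℝ`, and suppose `β ^ m` is real. As `K(β)` has no proper intermediate fields, its real
elements form `K`, so `β ^ m ∈ K`. Then all roots of `P` have the same `m`-th power, hence the same
absolute value. One of them, `α`, is real because `p` is odd, and comparing with the product of all
roots shows that `α ^ p` is, up to sign, the constant coefficient of the monic multiple of `P`. So
`P` is a multiple of some `X ^ p - c`, which `t³ + t² + t - 1` is not.
-/

open Polynomial IntermediateField
open Filter (Tendsto atBot atTop tendsto_neg_atBot_atTop)

section FieldExtension

variable {K L : Type*} [Field K] [Field L] [Algebra K L] {x z : L}

lemma isIntegral_of_natDegree_minpoly_ne_zero (hx : (minpoly K x).natDegree ≠ 0) :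
    IsIntegral K x :=
  minpoly.ne_zero_iff.mp (ne_zero_of_natDegree_gt (Nat.pos_of_ne_zero hx))

lemma isAtom_adjoin_simple_of_prime_natDegree_minpoly (hx : (minpoly K x).natDegree.Prime) :
    IsAtom K⟮x⟯ := by
  have hint : IsIntegral K x := isIntegral_of_natDegree_minpoly_ne_zero hx.ne_zero
  have : IsSimpleOrder (IntermediateField K K⟮x⟯) :=
    isSimpleOrder_of_finrank_prime K K⟮x⟯ (by rwa [adjoin.finrank hint])
  refine ⟨fun hbot ↦ ?_, fun F hF ↦ ?_⟩
  · rw [← adjoin.finrank hint, hbot, IntermediateField.finrank_bot] at hx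
    exact Nat.not_prime_one hx
  · rcases eq_bot_or_eq_top (restrict hF.le) with hF' | hF'
    · rw [← lift_restrict hF.le, hF', lift_bot]
    · exact absurd (by rw [← lift_restrict hF.le, hF', lift_top]) hF.ne

lemma pow_eq_pow_of_aeval_minpoly_eq_zero {m : ℕ} (hm : x ^ m ∈ (⊥ : IntermediateField K L))
    (hz : aeval z (minpoly K x) = 0) : z ^ m = x ^ m := by
  obtain ⟨c, hc⟩ := mem_bot.mp hm
  have hdvd : minpoly K x ∣ X ^ m - C c := minpoly.dvd K x (by simp [hc])
  have hroot : aeval z (X ^ m - C c) = 0 := aeval_eq_zero_of_dvd_aeval_eq_zero hdvd hz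
  rw [← hc]
  simpa [sub_eq_zero] using hroot

end FieldExtension

lemma norm_eq_of_aeval_minpoly_eq_zero {K L : Type*} [Field K] [NormedField L] [Algebra K L]
    {x z : L} {m : ℕ} (hm : m ≠ 0) (hpow : x ^ m ∈ (⊥ : IntermediateField K L))
    (hz : aeval z (minpoly K x) = 0) : ‖z‖ = ‖x‖ := by
  have hnorm : ‖z‖ ^ m = ‖x‖ ^ m := by
    rw [← norm_pow, ← norm_pow, pow_eq_pow_of_aeval_minpoly_eq_zero hpow hz]
  exact (pow_left_inj₀ (norm_nonneg z) (norm_nonneg x) hm).mp hnorm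

lemma norm_coeff_zero_eq_pow_natDegree {L : Type*} [NormedField L] {P : L[X]} (hP : P.Monic)
    (hsplits : P.Splits) {r : ℝ} (hr : ∀ z ∈ P.roots, ‖z‖ = r) :
    ‖P.coeff 0‖ = r ^ P.natDegree := by
  have hprod : ‖P.roots.prod‖ = (P.roots.map norm).prod := map_multiset_prod normHom P.roots
  rw [hsplits.coeff_zero_eq_prod_roots_of_monic hP, norm_mul, norm_pow, norm_neg, norm_one,
    one_pow, one_mul, hprod, Multiset.map_congr rfl hr, Multiset.map_const',
    Multiset.prod_replicate, hsplits.natDegree_eq_card_roots]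

lemma surjective_eval_of_odd_natDegree_of_monic {P : ℝ[X]} (hP : P.Monic) (hodd : Odd P.natDegree) :
    Function.Surjective fun x ↦ P.eval x := by
  have hdeg : 0 < P.degree := natDegree_pos_iff_degree_pos.mp hodd.pos
  have htop : Tendsto (fun x ↦ P.eval x) atTop atTop :=
    P.tendsto_atTop_of_leadingCoeff_nonneg hdeg (by simp [hP.leadingCoeff])
  have hneg : Tendsto (fun x ↦ (P.comp (-X)).eval x) atTop atBot := by
    refine tendsto_atBot_of_leadingCoeff_nonpos _ ?_ ?_
    · exact natDegree_pos_iff_degree_pos.mp (by simpa [natDegree_comp] using hodd.pos)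
    · simp [leadingCoeff_comp, hP.leadingCoeff, hodd.neg_one_pow]
  have hbot : Tendsto (fun x ↦ P.eval x) atBot atBot := by
    simpa [Function.comp_def] using hneg.comp tendsto_neg_atBot_atTop
  exact P.continuous.surjective htop hbot

section RealSubfield

variable {K : Type*} [Field K] [Algebra K ℝ] [Algebra K ℂ] [IsScalarTower K ℝ ℂ] {β : ℂ}

lemma mem_bot_of_mem_adjoin_of_im_eq_zero (hβ : (minpoly K β).natDegree.Prime) (him : β.im ≠ 0)
    {z : ℂ} (hz : z ∈ K⟮β⟯) (hreal : z.im = 0) : z ∈ (⊥ : IntermediateField K ℂ) := by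
  let R : IntermediateField K ℂ := (IsScalarTower.toAlgHom K ℝ ℂ).fieldRange
  have hβR : ¬K⟮β⟯ ≤ R := fun hle ↦ by
    obtain ⟨a, rfl⟩ := hle (mem_adjoin_simple_self K β)
    exact him (Complex.ofReal_im a)
  have hdisj : Disjoint K⟮β⟯ R :=
    (isAtom_adjoin_simple_of_prime_natDegree_minpoly hβ).not_le_iff_disjoint.mp hβR
  have hzR : z ∈ R := ⟨z.re, Complex.ext rfl hreal.symm⟩
  exact hdisj.le_bot ⟨hz, hzR⟩

theorem exists_minpoly_eq_X_pow_sub_C_of_pow_im_eq_zero (hprime : (minpoly K β).natDegree.Prime)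
    (hodd : Odd (minpoly K β).natDegree) (him : β.im ≠ 0) {m : ℕ} (hm : m ≠ 0)
    (hreal : (β ^ m).im = 0) : ∃ c : K, minpoly K β = X ^ (minpoly K β).natDegree - C c := by
  set P := minpoly K β
  have hint : IsIntegral K β := isIntegral_of_natDegree_minpoly_ne_zero hprime.ne_zero
  have hmonic : P.Monic := minpoly.monic hint
  have hpow : β ^ m ∈ (⊥ : IntermediateField K ℂ) :=
    mem_bot_of_mem_adjoin_of_im_eq_zero hprime him (pow_mem (mem_adjoin_simple_self K β) m) hreal
  obtain ⟨α, hα⟩ : ∃ α : ℝ, aeval α P = 0 := by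
    simpa using surjective_eval_of_odd_natDegree_of_monic (hmonic.map (algebraMap K ℝ))
      (by simpa using hodd) 0
  have hαℂ : aeval (α : ℂ) P = 0 := by
    simpa [hα] using aeval_algebraMap_apply ℂ α P
  have hroots : ∀ z ∈ (P.map (algebraMap K ℂ)).roots, ‖z‖ = ‖(α : ℂ)‖ := fun z hz ↦ by
    rw [norm_eq_of_aeval_minpoly_eq_zero hm hpow hαℂ]
    exact norm_eq_of_aeval_minpoly_eq_zero hm hpow (by simpa using (mem_roots'.mp hz).2)
  have habs : |α ^ P.natDegree| = |algebraMap K ℝ (P.coeff 0)| := by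
    have hcoeff := norm_coeff_zero_eq_pow_natDegree (hmonic.map (algebraMap K ℂ))
      (IsAlgClosed.splits _) hroots
    rw [coeff_map, natDegree_map, IsScalarTower.algebraMap_apply K ℝ ℂ] at hcoeff
    simpa using hcoeff.symm
  obtain ⟨c, hc⟩ : ∃ c : K, α ^ P.natDegree = algebraMap K ℝ c := by
    rcases abs_eq_abs.mp habs with h | h
    · exact ⟨P.coeff 0, h⟩
    · exact ⟨-P.coeff 0, by rw [h, map_neg]⟩
  have hPα : P = minpoly K α :=
    minpoly.eq_of_irreducible_of_monic (minpoly.irreducible hint) hα hmonic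
  have hdvd : P ∣ X ^ P.natDegree - C c := hPα ▸ minpoly.dvd K α (by simp [← hPα, hc])
  exact ⟨c, (eq_of_monic_of_dvd_of_natDegree_le hmonic
    (monic_X_pow_sub_C c hprime.ne_zero) hdvd (by simp)).symm⟩

theorem no_power_real_of_root_general {P : K[X]} (hirr : Irreducible P)
    (hprime : P.natDegree.Prime) (hodd : Odd P.natDegree) {i : ℕ} (hi₀ : 0 < i)
    (hi : i < P.natDegree) (hcoeff : P.coeff i ≠ 0) (hroot : aeval β P = 0) (him : β.im ≠ 0)
    {m : ℕ} (hm : 1 ≤ m) : (β ^ m).im ≠ 0 := by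
  intro hreal
  have hlead : P.leadingCoeff⁻¹ ≠ 0 := inv_ne_zero (leadingCoeff_ne_zero.mpr hirr.ne_zero)
  have hmin : P * C P.leadingCoeff⁻¹ = minpoly K β := minpoly.eq_of_irreducible hirr hroot
  have hdeg : (minpoly K β).natDegree = P.natDegree := by
    rw [← hmin, natDegree_mul_C hlead]
  obtain ⟨c, hc⟩ := exists_minpoly_eq_X_pow_sub_C_of_pow_im_eq_zero (hdeg ▸ hprime)
    (hdeg ▸ hodd) him (Nat.one_le_iff_ne_zero.mp hm) hreal
  have hzero : P.coeff i * P.leadingCoeff⁻¹ = 0 := by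
    rw [← coeff_mul_C, hmin, hc, hdeg]
    simp [coeff_X_pow, coeff_C, hi.ne, hi₀.ne']
  exact mul_ne_zero hcoeff hlead hzero

end RealSubfield

lemma irreducible_X_pow_three_add_X_sq_add_X_sub_one :
    Irreducible (X ^ 3 + X ^ 2 + X - 1 : ℚ[X]) := by
  have hmonic : (X ^ 3 + X ^ 2 + X - 1 : ℤ[X]).Monic := by monicity!
  have hdeg : (X ^ 3 + X ^ 2 + X - 1 : ℤ[X]).natDegree = 3 := by compute_degree!
  have hirr : Irreducible (X ^ 3 + X ^ 2 + X - 1 : ℤ[X]) := by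
    rw [hmonic.irreducible_iff_roots_eq_zero_of_degree_le_three (by omega) (by omega)]
    refine Multiset.eq_zero_of_forall_notMem fun n hn ↦ ?_
    have hn0 : n ^ 3 + n ^ 2 + n - 1 = 0 := by simpa using (mem_roots'.mp hn).2
    have hunit : IsUnit n := isUnit_of_dvd_one ⟨n ^ 2 + n + 1, by linear_combination -hn0⟩
    rcases Int.isUnit_iff.mp hunit with rfl | rfl <;> norm_num at hn0
  simpa using (hmonic.irreducible_iff_irreducible_map_fraction_map (K := ℚ)).mp hirr

/-- If `β` is a nonreal complex root of `t³+t²+t−1`, then no positive power of `β`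
is real (i.e. the argument of `β` is incommensurable with `2π`). -/
theorem no_power_real_of_root (β : ℂ)
    (hroot : β ^ 3 + β ^ 2 + β - 1 = 0) (him : β.im ≠ 0) :
    ∀ m : ℕ, 1 ≤ m → (β ^ m).im ≠ 0 := by
  intro m hm
  have hdeg : (X ^ 3 + X ^ 2 + X - 1 : ℚ[X]).natDegree = 3 := by compute_degree!
  exact no_power_real_of_root_general (i := 1) irreducible_X_pow_three_add_X_sq_add_X_sub_one
    (by rw [hdeg]; exact Nat.prime_three) (by rw [hdeg]; decide) one_pos (by rw [hdeg]; decide)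
    (by simp [coeff_X, coeff_one]) (by simpa using hroot) him hm
end

section
/- Let A be the 3×3 integer matrix with rows (−1,1,0), (−1,0,1), (1,0,0), let α be the real root of t³+t²+t−1 and β a nonreal complex root of t³+t²+t−1. If c₁, c₂, c₃ are complex numbers such that the (1,1) entry of A^N equals c₁α^N + c₂β^N + c₃(β̄)^N for every N ≥ 0 (β̄ the complex conjugate of β), then c₂ ≠ 0 and c₃ ≠ 0. -/
open Matrix

/-!
If `c₂` or `c₃` vanished, the real sequence `(A ^ N) 0 0` would be a combination of the powers of
`α` and of a single nonreal number `γ`. The operator `u n ↦ u (n + 1) - α * u n` kills the first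
part and leaves a real sequence of the form `d * γ ^ n`; since `d` and `d * γ` are both real,
`d = 0`, and so `γ` does not contribute. The sequence would then be geometric, but it starts with
`1, -1, 0`.
-/

theorem eq_zero_of_im_eq_zero_of_im_mul_eq_zero {z w : ℂ} (hw : w.im ≠ 0)
    (hz : z.im = 0) (hzw : (z * w).im = 0) : z = 0 := by
  have hre : z.re = 0 := by simpa [Complex.mul_im, hz, hw] using hzw
  exact Complex.ext hre hz

section RealExponentialSum

variable {u : ℕ → ℝ} {α : ℝ} {β c₁ c₂ c₃ : ℂ}

theorem nonreal_coeff_eq_zero (hβ : β.im ≠ 0)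
    (h : ∀ n, (u n : ℂ) = c₁ * (α : ℂ) ^ n + c₂ * β ^ n) : c₂ = 0 := by
  have hdiff (n : ℕ) : c₂ * (β - α) * β ^ n = ((u (n + 1) - α * u n : ℝ) : ℂ) := by
    push_cast
    rw [h, h]
    ring
  have hprod : c₂ * (β - α) = 0 := by
    apply eq_zero_of_im_eq_zero_of_im_mul_eq_zero hβ
    · simpa only [pow_zero, mul_one, Complex.ofReal_im] using congrArg Complex.im (hdiff 0)
    · simpa only [pow_one, Complex.ofReal_im] using congrArg Complex.im (hdiff 1)
  have hβα : β - α ≠ 0 := fun hzero ↦ hβ (by simp [sub_eq_zero.mp hzero])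
  exact (mul_eq_zero.mp hprod).resolve_right hβα

theorem mul_eq_sq_of_eq_add_nonreal (hβ : β.im ≠ 0)
    (h : ∀ n, (u n : ℂ) = c₁ * (α : ℂ) ^ n + c₂ * β ^ n) (n : ℕ) :
    u n * u (n + 2) = u (n + 1) ^ 2 := by
  have hgeom (k : ℕ) : (u k : ℂ) = c₁ * (α : ℂ) ^ k := by
    simpa only [nonreal_coeff_eq_zero hβ h, zero_mul, add_zero] using h k
  apply Complex.ofReal_injective
  push_cast
  rw [hgeom, hgeom, hgeom]
  ring

theorem coeffs_nonzero_general (hβ : β.im ≠ 0)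
    (h : ∀ n, (u n : ℂ) = c₁ * (α : ℂ) ^ n + c₂ * β ^ n + c₃ * (starRingEnd ℂ β) ^ n)
    {n : ℕ} (hu : u n * u (n + 2) ≠ u (n + 1) ^ 2) : c₂ ≠ 0 ∧ c₃ ≠ 0 := by
  have hβ_conj : (starRingEnd ℂ β).im ≠ 0 := by simpa using hβ
  constructor
  · rintro rfl
    exact hu (mul_eq_sq_of_eq_add_nonreal hβ_conj (by simpa using h) n)
  · rintro rfl
    exact hu (mul_eq_sq_of_eq_add_nonreal hβ (by simpa using h) n)

end RealExponentialSum

/-- If the `(1,1)` entry of `A^N` (for `A` the matrix of the monomial map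
`(x,y,z) ↦ (y/x, z/x, x)`) is written as `c₁α^N + c₂β^N + c₃β̄^N`, where `α` is the
real root and `β` a nonreal root of `t³+t²+t−1`, then `c₂ ≠ 0` and `c₃ ≠ 0`. -/
theorem coeffs_nonzero (α : ℝ) (hα : α ^ 3 + α ^ 2 + α - 1 = 0)
    (β : ℂ) (hβ : β ^ 3 + β ^ 2 + β - 1 = 0) (him : β.im ≠ 0)
    (c₁ c₂ c₃ : ℂ)
    (h : ∀ N : ℕ,
      (((!![-1, 1, 0; -1, 0, 1; 1, 0, 0] : Matrix (Fin 3) (Fin 3) ℤ) ^ N) 0 0 : ℂ) =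
        c₁ * (α : ℂ) ^ N + c₂ * β ^ N + c₃ * (starRingEnd ℂ β) ^ N) :
    c₂ ≠ 0 ∧ c₃ ≠ 0 := by
  let A : Matrix (Fin 3) (Fin 3) ℤ := !![-1, 1, 0; -1, 0, 1; 1, 0, 0]
  have hA : (A ^ 0) 0 0 * (A ^ 2) 0 0 ≠ (A ^ 1) 0 0 ^ 2 := by decide
  exact coeffs_nonzero_general (u := fun N ↦ ((A ^ N) 0 0 : ℝ)) him
    (fun N ↦ by exact_mod_cast h N) (n := 0) (by exact_mod_cast hA)
end

section
/- Let A be an n×n nonsingular integer matrix (n ≥ 1) whose characteristic polynomial has a simple nonreal complex root λ such that λ/|λ| is not a root of unity (i.e., writing λ = r e^{iθ}, the angle θ is incommensurable with 2π), and such that every root μ of the characteristic polynomial with μ ≠ λ and μ ≠ λ̄ satisfies |μ| < |λ|. Then the sequence d_N := D(A^N) does not satisfy any linear recurrence with constant coefficients: there is no k ≥ 1 and real numbers c_1,…,c_k such that d_{N+k} = c_1 d_{N+k−1} + ⋯ + c_k d_N for all N ≥ 0. -/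
open Matrix Finset Polynomial

/-!
A simple dominant nonreal eigenvalue `λ` makes `A ^ N` asymptotic to `T (λ ^ N)` for a nonzero real
linear map `T` from `ℂ` to matrices, obtained from the spectral idempotent of `{λ, λ̄}`. The degree
`D` is continuous and piecewise linear. Since the powers of `λ / |λ|` are dense in the circle, a
linear recurrence for `D (A ^ N)` passes to the limit and becomes the functional equation
`f z = ∑ i, c i * f (λ⁻¹ ^ (i + 1) * z)` for `f = D ∘ T` on `ℂ \ {0}`. The function `f` is linear
off finitely many real lines, and high powers of `λ⁻¹` move any given point off these lines, so the
functional equation makes `f` locally linear everywhere on `ℂ \ {0}`. As this set is connected, `f`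
is linear there, hence odd, which contradicts the positivity of `D`.
-/

open Filter Topology

section PiecewiseLinear

variable {E F : Type*} [AddCommGroup E] [Module ℝ E] [TopologicalSpace E]
  [AddCommGroup F] [Module ℝ F] [TopologicalSpace F]

/-- A continuous function on a real topological vector space that agrees at every point with one of
finitely many continuous linear functionals. The pieces are linear rather than affine. -/
def IsPiecewiseLinear (f : E → ℝ) : Prop :=
  Continuous f ∧ ∃ T : Set (E →L[ℝ] ℝ), T.Finite ∧ ∀ x, ∃ L ∈ T, f x = L x

/-- The function agrees with a continuous linear functional on a neighbourhood of the point. A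
piecewise linear function has this property away from the walls separating its pieces. -/
def IsLocallyLinearAt (f : E → ℝ) (x : E) : Prop :=
  ∃ L : E →L[ℝ] ℝ, f =ᶠ[𝓝 x] L

namespace IsPiecewiseLinear

variable {f g : E → ℝ}

lemma of_clm (L : E →L[ℝ] ℝ) : IsPiecewiseLinear L :=
  ⟨L.continuous, {L}, Set.finite_singleton L, fun _ => ⟨L, rfl, rfl⟩⟩

lemma zero : IsPiecewiseLinear fun _ : E => (0 : ℝ) :=
  of_clm 0

lemma max (hf : IsPiecewiseLinear f) (hg : IsPiecewiseLinear g) :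
    IsPiecewiseLinear fun x => max (f x) (g x) := by
  obtain ⟨hfc, S, hS, hfS⟩ := hf
  obtain ⟨hgc, T, hT, hgT⟩ := hg
  refine ⟨hfc.max hgc, S ∪ T, hS.union hT, fun x => ?_⟩
  obtain ⟨L, hL, hfL⟩ := hfS x
  obtain ⟨M, hM, hgM⟩ := hgT x
  rcases max_choice (f x) (g x) with h | h
  · exact ⟨L, Or.inl hL, h.trans hfL⟩
  · exact ⟨M, Or.inr hM, h.trans hgM⟩

lemma add (hf : IsPiecewiseLinear f) (hg : IsPiecewiseLinear g) :
    IsPiecewiseLinear fun x => f x + g x := by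
  obtain ⟨hfc, S, hS, hfS⟩ := hf
  obtain ⟨hgc, T, hT, hgT⟩ := hg
  refine ⟨hfc.add hgc, Set.image2 (· + ·) S T, hS.image2 _ hT, fun x => ?_⟩
  obtain ⟨L, hL, hfL⟩ := hfS x
  obtain ⟨M, hM, hgM⟩ := hgT x
  exact ⟨L + M, Set.mem_image2_of_mem hL hM, congrArg₂ (· + ·) hfL hgM⟩

lemma sum {ι : Type*} {s : Finset ι} {f : ι → E → ℝ}
    (hf : ∀ i ∈ s, IsPiecewiseLinear (f i)) : IsPiecewiseLinear fun x => ∑ i ∈ s, f i x := by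
  classical
  induction s using Finset.induction_on with
  | empty => simpa using zero
  | insert a s ha ih =>
    simp only [Finset.forall_mem_insert] at hf
    simpa only [Finset.sum_insert ha] using hf.1.add (ih hf.2)

lemma fold_max {ι : Type*} {s : Finset ι} {f : ι → E → ℝ}
    (hf : ∀ i ∈ s, IsPiecewiseLinear (f i)) :
    IsPiecewiseLinear fun x => s.fold Max.max 0 fun i => f i x := by
  classical
  induction s using Finset.induction_on with
  | empty => simpa using zero
  | insert a s ha ih =>
    simp only [Finset.forall_mem_insert] at hf
    simpa only [Finset.fold_insert ha] using hf.1.max (ih hf.2)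

lemma comp_clm (hf : IsPiecewiseLinear f) (A : F →L[ℝ] E) : IsPiecewiseLinear (f ∘ A) := by
  obtain ⟨hfc, T, hT, hfT⟩ := hf
  refine ⟨hfc.comp A.continuous, (·.comp A) '' T, hT.image _, fun x => ?_⟩
  obtain ⟨L, hL, hfL⟩ := hfT (A x)
  exact ⟨L.comp A, Set.mem_image_of_mem _ hL, hfL⟩

/-
On the ray through `x`, the quotient `f (t • x) / t` is continuous in `t > 0` and takes finitely
many values.
-/
lemma map_smul_of_nonneg [ContinuousSMul ℝ E] (hf : IsPiecewiseLinear f) {t : ℝ} (ht : 0 ≤ t)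
    (x : E) : f (t • x) = t * f x := by
  obtain ⟨hfc, T, hT, hfT⟩ := hf
  rcases ht.eq_or_lt with rfl | ht
  · obtain ⟨L, -, hfL⟩ := hfT 0
    rw [zero_smul, hfL, map_zero, zero_mul]
  set slope : ℝ → ℝ := fun s => f (s • x) / s
  have hconn : IsPreconnected (slope '' Set.Ioi 0) :=
    isPreconnected_Ioi.image _ <|
      ContinuousOn.div (by fun_prop) continuousOn_id fun s hs => (Set.mem_Ioi.1 hs).ne'
  have hfin : (slope '' Set.Ioi 0).Finite := by
    refine (hT.image fun L => L x).subset ?_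
    rintro _ ⟨s, hs, rfl⟩
    obtain ⟨L, hL, hfL⟩ := hfT (s • x)
    refine ⟨L, hL, ?_⟩
    simp only [slope, hfL, map_smul, smul_eq_mul, mul_div_cancel_left₀ _ (Set.mem_Ioi.1 hs).ne']
  have hsub : (slope '' Set.Ioi 0).Subsingleton :=
    Set.not_nontrivial_iff.1 fun h => hconn.infinite_of_nontrivial h hfin
  have hslope : slope t = slope 1 :=
    hsub (Set.mem_image_of_mem _ ht) (Set.mem_image_of_mem _ (Set.mem_Ioi.2 one_pos))
  simp only [slope, one_smul, div_one] at hslope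
  rw [← hslope, mul_div_cancel₀ _ ht.ne']

lemma exists_finite_isLocallyLinearAt (hf : IsPiecewiseLinear f) :
    ∃ W : Set (E →L[ℝ] ℝ), W.Finite ∧ (∀ L ∈ W, L ≠ 0) ∧
      ∀ x, (∀ L ∈ W, L x ≠ 0) → IsLocallyLinearAt f x := by
  obtain ⟨hfc, T, hT, hfT⟩ := hf
  refine ⟨Set.image2 (· - ·) T T \ {0}, (hT.image2 _ hT).sdiff, fun L hL => hL.2, fun x hx => ?_⟩
  obtain ⟨L, hL, hfL⟩ := hfT x
  have hne : ∀ M ∈ T, M ≠ L → ∀ᶠ y in 𝓝 x, f y ≠ M y := fun M hM hML => by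
    refine (hfc.continuousAt.ne_iff_eventually_ne M.continuous.continuousAt).1 fun hfM => ?_
    refine hx (L - M) ⟨Set.mem_image2_of_mem hL hM, sub_ne_zero.2 hML.symm⟩ ?_
    rw [_root_.sub_apply, ← hfL, ← hfM, sub_self]
  have hall : ∀ᶠ y in 𝓝 x, ∀ M ∈ T, M ≠ L → f y ≠ M y :=
    (eventually_all_finite hT).2 fun M hM => eventually_imp_distrib_left.2 (hne M hM)
  refine ⟨L, hall.mono fun y hy => ?_⟩
  obtain ⟨M, hM, hfM⟩ := hfT y
  obtain rfl : M = L := by_contra fun hML => hy M hM hML hfM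
  exact hfM

end IsPiecewiseLinear

end PiecewiseLinear

lemma exists_clm_eqOn_of_isPreconnected {E : Type*} [NormedAddCommGroup E] [NormedSpace ℝ E]
    {f : E → ℝ} {s : Set E} (hs : IsPreconnected s) (hf : ∀ x ∈ s, IsLocallyLinearAt f x) :
    ∃ L : E →L[ℝ] ℝ, Set.EqOn f L s := by
  rcases s.eq_empty_or_nonempty with rfl | ⟨x₀, hx₀⟩
  · exact ⟨0, Set.eqOn_empty _ _⟩
  have hfderiv : ∀ {x} {L : E →L[ℝ] ℝ}, f =ᶠ[𝓝 x] L → fderiv ℝ f x = L := fun h => by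
    rw [h.fderiv_eq, ContinuousLinearMap.fderiv]
  have hlocal : ∀ x ∈ s, ∀ᶠ y in 𝓝[s] x, fderiv ℝ f x = fderiv ℝ f y := fun x hx => by
    obtain ⟨L, hL⟩ := hf x hx
    filter_upwards [nhdsWithin_le_nhds hL.eventuallyEq_nhds] with y hy
    rw [hfderiv hL, hfderiv hy]
  refine ⟨fderiv ℝ f x₀, fun x hx => ?_⟩
  have hconst : fderiv ℝ f x₀ = fderiv ℝ f x :=
    hs.induction₂ (fun x y => fderiv ℝ f x = fderiv ℝ f y) hlocal
      (fun _ _ _ _ _ _ => Eq.trans) (fun _ _ _ _ => Eq.symm) hx₀ hx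
  obtain ⟨L, hL⟩ := hf x hx
  rw [hconst, hfderiv hL, hL.eq_of_nhds]

section Rotation

lemma im_eq_zero_of_apply_mul_eq_zero {L : ℂ →L[ℝ] ℝ} (hL : L ≠ 0) {w z : ℂ} (hz : z ≠ 0)
    (hLz : L z = 0) (hLwz : L (w * z) = 0) : w.im = 0 := by
  have hdecomp : ∀ v : ℂ, L (v * z) = v.im * L (Complex.I * z) := fun v => by
    have hv : v * z = v.re • z + v.im • (Complex.I * z) := by
      simp only [Complex.real_smul]
      linear_combination -z * Complex.re_add_im v
    rw [hv, map_add, map_smul, map_smul, hLz, smul_zero, zero_add, smul_eq_mul]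
  by_contra hw
  have hLI : L (Complex.I * z) = 0 :=
    (mul_eq_zero.1 ((hdecomp w).symm.trans hLwz)).resolve_left hw
  refine hL (ContinuousLinearMap.ext fun v => ?_)
  rw [← div_mul_cancel₀ v hz, hdecomp, hLI, mul_zero, _root_.zero_apply]

variable {f : ℂ → ℝ} {u z : ℂ}

lemma subsingleton_setOf_apply_pow_mul_eq_zero {L : ℂ →L[ℝ] ℝ} (hL : L ≠ 0)
    (hu : ∀ m : ℕ, 1 ≤ m → (u ^ m).im ≠ 0) (hz : z ≠ 0) :
    {m : ℕ | L (u ^ m * z) = 0}.Subsingleton := by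
  have hu0 : u ≠ 0 := by
    rintro rfl
    exact hu 1 le_rfl (by simp)
  have hle : ∀ p q : ℕ, L (u ^ p * z) = 0 → L (u ^ q * z) = 0 → q ≤ p := by
    intro p q hp hq
    by_contra! hpq
    refine hu (q - p) (by lia)
      (im_eq_zero_of_apply_mul_eq_zero hL (mul_ne_zero (pow_ne_zero p hu0) hz) hp ?_)
    rwa [← mul_assoc, ← pow_add, Nat.sub_add_cancel hpq.le]
  exact fun p hp q hq => (hle q p hq hp).antisymm (hle p q hp hq)

lemma IsPiecewiseLinear.eventually_isLocallyLinearAt_pow_mul (hf : IsPiecewiseLinear f)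
    (hu : ∀ m : ℕ, 1 ≤ m → (u ^ m).im ≠ 0) (hz : z ≠ 0) :
    ∀ᶠ m : ℕ in atTop, IsLocallyLinearAt f (u ^ m * z) := by
  obtain ⟨W, hW, hW0, hlin⟩ := hf.exists_finite_isLocallyLinearAt
  rw [← Nat.cofinite_eq_atTop]
  refine (hW.biUnion fun L hL =>
    (subsingleton_setOf_apply_pow_mul_eq_zero (hW0 L hL) hu hz).finite).subset fun m hm => ?_
  obtain ⟨L, hL, hLm⟩ : ∃ L ∈ W, L (u ^ m * z) = 0 := by
    by_contra! h
    exact hm (hlin _ h)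
  exact Set.mem_biUnion hL hLm

lemma IsLocallyLinearAt.of_eventually_eq_sum {k : ℕ} {c : Fin k → ℝ}
    (hrec : ∀ᶠ w in 𝓝 z, f w = ∑ i : Fin k, c i * f (u ^ ((i : ℕ) + 1) * w))
    (hf : ∀ i : Fin k, IsLocallyLinearAt f (u ^ ((i : ℕ) + 1) * z)) : IsLocallyLinearAt f z := by
  choose L hL using hf
  refine ⟨∑ i : Fin k, c i • (L i).comp (ContinuousLinearMap.mul ℝ ℂ (u ^ ((i : ℕ) + 1))), ?_⟩
  have hpieces : ∀ᶠ w in 𝓝 z, ∀ i : Fin k,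
      f (u ^ ((i : ℕ) + 1) * w) = L i (u ^ ((i : ℕ) + 1) * w) :=
    eventually_all.2 fun i =>
      (continuous_const_mul (u ^ ((i : ℕ) + 1))).continuousAt.eventually (hL i)
  filter_upwards [hrec, hpieces] with w hw hwL
  simp [hw, hwL]

lemma IsPiecewiseLinear.isLocallyLinearAt_of_eq_sum (hf : IsPiecewiseLinear f)
    (hu : ∀ m : ℕ, 1 ≤ m → (u ^ m).im ≠ 0) {k : ℕ} {c : Fin k → ℝ}
    (hrec : ∀ w, w ≠ 0 → f w = ∑ i : Fin k, c i * f (u ^ ((i : ℕ) + 1) * w)) (hz : z ≠ 0) :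
    IsLocallyLinearAt f z := by
  have hu0 : u ≠ 0 := by
    rintro rfl
    exact hu 1 le_rfl (by simp)
  obtain ⟨M, hM⟩ := eventually_atTop.1 (hf.eventually_isLocallyLinearAt_pow_mul hu hz)
  have hdescent : ∀ j m : ℕ, M ≤ m + j → IsLocallyLinearAt f (u ^ m * z) := by
    intro j
    induction j with
    | zero => exact hM
    | succ j ih =>
      intro m hm
      have hmz : u ^ m * z ≠ 0 := mul_ne_zero (pow_ne_zero m hu0) hz
      refine .of_eventually_eq_sum ((eventually_ne_nhds hmz).mono hrec) fun i => ?_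
      rw [← mul_assoc, ← pow_add]
      exact ih _ (by lia)
  simpa using hdescent M 0 (by lia)

lemma IsPiecewiseLinear.map_neg_of_eq_sum (hf : IsPiecewiseLinear f)
    (hu : ∀ m : ℕ, 1 ≤ m → (u ^ m).im ≠ 0) {k : ℕ} {c : Fin k → ℝ}
    (hrec : ∀ w, w ≠ 0 → f w = ∑ i : Fin k, c i * f (u ^ ((i : ℕ) + 1) * w)) (hz : z ≠ 0) :
    f (-z) = -f z := by
  have hconn : IsPreconnected ({0}ᶜ : Set ℂ) :=
    (isConnected_compl_singleton_of_one_lt_rank (by simp) 0).isPreconnected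
  obtain ⟨L, hL⟩ := exists_clm_eqOn_of_isPreconnected hconn fun w hw =>
    hf.isLocallyLinearAt_of_eq_sum hu hrec hw
  rw [hL hz, hL (neg_ne_zero.2 hz), map_neg]

end Rotation

section Density

lemma denseRange_zpow_circle {u : Circle} (hu : ∀ m : ℕ, 1 ≤ m → u ^ m ≠ 1) :
    DenseRange (u ^ · : ℤ → Circle) := by
  have : Fact (0 < 2 * Real.pi) := ⟨Real.two_pi_pos⟩
  have hsurj : Function.Surjective (AddCircle.toCircle : AddCircle (2 * Real.pi) → Circle) := by
    rw [← funext (AddCircle.homeomorphCircle_apply Real.two_pi_pos.ne')]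
    exact (AddCircle.homeomorphCircle Real.two_pi_pos.ne').surjective
  obtain ⟨θ, rfl⟩ := hsurj u
  have hθ : addOrderOf θ = 0 := addOrderOf_eq_zero_iff'.2 fun m hm hmθ =>
    hu m hm (by rw [← AddCircle.toCircle_nsmul, hmθ, AddCircle.toCircle_zero])
  simpa only [Function.comp_def, AddCircle.toCircle_zsmul] using
    hsurj.denseRange.comp (AddCircle.denseRange_zsmul_iff.2 hθ) AddCircle.continuous_toCircle

lemma mapClusterPt_pow_of_norm_eq_one {u z : ℂ} (hu : ‖u‖ = 1) (hz : ‖z‖ = 1)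
    (hirr : ∀ m : ℕ, 1 ≤ m → u ^ m ≠ 1) : MapClusterPt z atTop fun N : ℕ => u ^ N := by
  obtain ⟨u, rfl⟩ : ∃ v : Circle, (v : ℂ) = u := ⟨⟨u, mem_sphere_zero_iff_norm.2 hu⟩, rfl⟩
  obtain ⟨z, rfl⟩ : ∃ v : Circle, (v : ℂ) = z := ⟨⟨z, mem_sphere_zero_iff_norm.2 hz⟩, rfl⟩
  have hu' : ∀ m : ℕ, 1 ≤ m → u ^ m ≠ 1 := fun m hm h =>
    hirr m hm (by rw [← Circle.coe_pow, h, Circle.coe_one])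
  have hcluster : MapClusterPt z atTop (u ^ · : ℕ → Circle) :=
    ((mapClusterPt_atTop_pow_tfae z u).out 3 0).1 (denseRange_zpow_circle hu' z)
  simp only [← Circle.coe_pow]
  exact hcluster.continuousAt_comp continuous_subtype_val.continuousAt

lemma im_pow_ne_zero_of_div_norm_pow_ne_one {lam : ℂ} (hlam : lam ≠ 0)
    (hirr : ∀ m : ℕ, 1 ≤ m → (lam / (‖lam‖ : ℂ)) ^ m ≠ 1) (m : ℕ) (hm : 1 ≤ m) :
    (lam ^ m).im ≠ 0 := by
  intro him
  have hsq : lam ^ (m * 2) = (‖lam‖ : ℂ) ^ (m * 2) := by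
    have := Complex.mul_conj' (lam ^ m)
    rwa [Complex.conj_eq_iff_im.2 him, ← sq, norm_pow, Complex.ofReal_pow, ← pow_mul,
      ← pow_mul] at this
  refine hirr (m * 2) (by lia) ?_
  rw [div_pow, hsq, div_self (pow_ne_zero _ (by simpa using hlam))]

end Density

section Oscillation

variable {E : Type*} [AddCommGroup E] [Module ℝ E] [TopologicalSpace E]
  [IsTopologicalAddGroup E] [ContinuousSMul ℝ E] {x : ℕ → E} {T : ℂ →L[ℝ] E} {lam : ℂ}

lemma exists_ultrafilter_tendsto_smul (hlam : lam ≠ 0)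
    (hirr : ∀ m : ℕ, 1 ≤ m → (lam / (‖lam‖ : ℂ)) ^ m ≠ 1)
    (hx : Tendsto (fun N : ℕ => (‖lam‖ ^ N)⁻¹ • (x N - T (lam ^ N))) atTop (𝓝 0))
    {z : ℂ} (hz : z ≠ 0) :
    ∃ U : Ultrafilter ℕ, ∀ m : ℕ,
      Tendsto (fun N : ℕ => (‖z‖ / ‖lam‖ ^ N) • x (N + m)) U (𝓝 (T (lam ^ m * z))) := by
  have hz' : (‖z‖ : ℂ) ≠ 0 := by simpa using hz
  obtain ⟨U, hU, hUz⟩ := mapClusterPt_iff_ultrafilter.1 <|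
    mapClusterPt_pow_of_norm_eq_one (u := lam / ‖lam‖) (z := z / ‖z‖)
      (by simp [hlam]) (by simp [hz]) hirr
  refine ⟨U, fun m => ?_⟩
  have herror := (hx.comp ((tendsto_add_atTop_nat m).mono_left hU)).const_smul (‖z‖ * ‖lam‖ ^ m)
  have hmain : Tendsto (fun N : ℕ => T (lam ^ m * (‖z‖ * (lam / ‖lam‖) ^ N))) U
      (𝓝 (T (lam ^ m * z))) := by
    have := (hUz.const_mul (‖z‖ : ℂ)).const_mul (lam ^ m)
    rw [mul_div_cancel₀ z hz'] at this
    exact (T.continuous.tendsto _).comp this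
  have hsum := herror.add hmain
  rw [smul_zero, zero_add] at hsum
  refine hsum.congr fun N => ?_
  have hscalar : ‖z‖ * ‖lam‖ ^ m * (‖lam‖ ^ (N + m))⁻¹ = ‖z‖ / ‖lam‖ ^ N := by
    field_simp
    ring
  have hrotation : lam ^ m * (‖z‖ * (lam / ‖lam‖) ^ N) = (‖z‖ / ‖lam‖ ^ N) • lam ^ (N + m) := by
    rw [Complex.real_smul]
    push_cast
    ring
  rw [Function.comp_apply, smul_smul, hscalar, hrotation, map_smul, smul_sub, sub_add_cancel]

lemma IsPiecewiseLinear.comp_eq_sum_of_linear_recurrence {D : E → ℝ} (hD : IsPiecewiseLinear D)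
    (hlam : lam ≠ 0) (hirr : ∀ m : ℕ, 1 ≤ m → (lam / (‖lam‖ : ℂ)) ^ m ≠ 1)
    (hx : Tendsto (fun N : ℕ => (‖lam‖ ^ N)⁻¹ • (x N - T (lam ^ N))) atTop (𝓝 0))
    {k : ℕ} {c : Fin k → ℝ}
    (hrec : ∀ N : ℕ, D (x (N + k)) = ∑ i : Fin k, c i * D (x (N + k - 1 - (i : ℕ))))
    {z : ℂ} (hz : z ≠ 0) :
    D (T z) = ∑ i : Fin k, c i * D (T (lam⁻¹ ^ ((i : ℕ) + 1) * z)) := by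
  obtain ⟨U, hU⟩ := exists_ultrafilter_tendsto_smul hlam hirr hx
    (mul_ne_zero (pow_ne_zero k (inv_ne_zero hlam)) hz)
  set t : ℕ → ℝ := fun N => ‖lam⁻¹ ^ k * z‖ / ‖lam‖ ^ N
  have hlim : ∀ j ≤ k, Tendsto (fun N => t N * D (x (N + (k - j)))) U
      (𝓝 (D (T (lam⁻¹ ^ j * z)))) := fun j hj => by
    have hpow : lam ^ (k - j) * (lam⁻¹ ^ k * z) = lam⁻¹ ^ j * z := by
      rw [← mul_assoc, inv_pow, inv_pow, pow_sub₀ _ hlam hj]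
      field_simp
    rw [← hpow]
    refine ((hD.1.tendsto _).comp (hU (k - j))).congr fun N => ?_
    exact hD.map_smul_of_nonneg (by positivity) _
  have hleft : Tendsto (fun N => t N * D (x (N + k))) U (𝓝 (D (T z))) := by
    simpa using hlim 0 k.zero_le
  have hright : Tendsto (fun N => ∑ i : Fin k, c i * (t N * D (x (N + (k - (i + 1)))))) U
      (𝓝 (∑ i : Fin k, c i * D (T (lam⁻¹ ^ ((i : ℕ) + 1) * z)))) :=
    tendsto_finsetSum _ fun i _ => (hlim (i + 1) i.isLt).const_mul (c i)
  refine tendsto_nhds_unique hleft (hright.congr fun N => ?_)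
  rw [hrec, Finset.mul_sum]
  refine Finset.sum_congr rfl fun i _ => ?_
  rw [mul_left_comm, show N + (k - (i + 1)) = N + k - 1 - i by lia]

theorem IsPiecewiseLinear.not_linear_recurrence_of_tendsto {D : E → ℝ} (hD : IsPiecewiseLinear D)
    (hpos : ∀ v, v ≠ 0 → 0 < D v) (hT : T ≠ 0) (hlam : lam ≠ 0)
    (hirr : ∀ m : ℕ, 1 ≤ m → (lam / (‖lam‖ : ℂ)) ^ m ≠ 1)
    (hx : Tendsto (fun N : ℕ => (‖lam‖ ^ N)⁻¹ • (x N - T (lam ^ N))) atTop (𝓝 0))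
    {k : ℕ} (c : Fin k → ℝ) :
    ¬ ∀ N : ℕ, D (x (N + k)) = ∑ i : Fin k, c i * D (x (N + k - 1 - (i : ℕ))) := by
  intro hrec
  obtain ⟨z, hTz⟩ : ∃ z, T z ≠ 0 := by
    by_contra! h
    exact hT (ContinuousLinearMap.ext h)
  have hz : z ≠ 0 := by
    rintro rfl
    exact hTz (map_zero T)
  have hu : ∀ m : ℕ, 1 ≤ m → (lam⁻¹ ^ m).im ≠ 0 := fun m hm => by
    have := im_pow_ne_zero_of_div_norm_pow_ne_one hlam hirr m hm
    simp [inv_pow, Complex.inv_im, this, hlam]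
  have hodd : D (T (-z)) = -D (T z) := (hD.comp_clm T).map_neg_of_eq_sum hu
    (fun w hw => hD.comp_eq_sum_of_linear_recurrence hlam hirr hx hrec hw) hz
  have hneg : 0 < D (T (-z)) := hpos _ (by rwa [map_neg, neg_ne_zero])
  linarith [hpos _ hTz]

end Oscillation

section Spectral

lemma tendsto_inv_pow_smul_pow_of_spectrum_lt {𝔸 : Type*} [NormedRing 𝔸] [NormedAlgebra ℂ 𝔸]
    [CompleteSpace 𝔸] [Nontrivial 𝔸] {a : 𝔸} {r : ℝ} (ha : ∀ μ ∈ spectrum ℂ a, ‖μ‖ < r) :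
    Tendsto (fun N : ℕ => ((r : ℂ) ^ N)⁻¹ • a ^ N) atTop (𝓝 0) := by
  have hr : 0 < r := (norm_nonneg _).trans_lt (ha _ (spectrum.nonempty a).choose_spec)
  lift r to NNReal using hr.le
  obtain ⟨ρ, haρ, hρr⟩ := ENNReal.lt_iff_exists_nnreal_btwn.1 <|
    spectrum.spectralRadius_lt_of_forall_lt a ha
  have hbound : ∀ᶠ N : ℕ in atTop, ‖a ^ N‖ ≤ (ρ : ℝ) ^ N := by
    have hGelfand := spectrum.pow_nnnorm_pow_one_div_tendsto_nhds_spectralRadius a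
    filter_upwards [hGelfand.eventually_lt_const haρ, eventually_gt_atTop 0] with N hN hN0
    rw [one_div, ENNReal.rpow_inv_lt_iff (by exact_mod_cast hN0), ENNReal.rpow_natCast] at hN
    exact_mod_cast hN.le
  have hgeom : Tendsto (fun N : ℕ => ((ρ / r : ℝ)) ^ N) atTop (𝓝 0) :=
    tendsto_pow_atTop_nhds_zero_of_lt_one (by positivity)
      ((div_lt_one hr).2 (by exact_mod_cast hρr))
  refine squeeze_zero_norm' (hbound.mono fun N hN => ?_) hgeom
  rw [norm_smul, norm_inv, norm_pow, Complex.norm_real, NNReal.norm_eq, div_pow, div_eq_inv_mul]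
  gcongr

/-
The polynomial `e` is congruent to `1` modulo `minpoly ℝ lam` and to `0` modulo the cofactor
of `minpoly ℝ lam` in `p`.
-/
lemma exists_spectral_idempotent {p : ℝ[X]} {lam : ℂ} (hsimple : (p.aroots ℂ).count lam = 1) :
    ∃ e : ℝ[X], aeval lam e = 1 ∧ p ∣ minpoly ℝ lam * e ∧ p ∣ e * (1 - e) := by
  have hmem : lam ∈ p.aroots ℂ := Multiset.count_pos.1 (by lia)
  have hint : IsIntegral ℝ lam := Algebra.IsIntegral.isIntegral lam
  obtain ⟨hp0, hroot⟩ := mem_aroots.1 hmem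
  obtain ⟨q, rfl⟩ := minpoly.dvd ℝ lam hroot
  have hq : aeval lam q ≠ 0 := fun hq => by
    have hminpoly : 0 < ((minpoly ℝ lam).aroots ℂ).count lam :=
      Multiset.count_pos.2 (mem_aroots.2 ⟨left_ne_zero_of_mul hp0, minpoly.aeval ℝ lam⟩)
    have hcofactor : 0 < (q.aroots ℂ).count lam :=
      Multiset.count_pos.2 (mem_aroots.2 ⟨right_ne_zero_of_mul hp0, hq⟩)
    rw [aroots_mul hp0, Multiset.count_add] at hsimple
    lia
  obtain ⟨a, b, hab⟩ := ((minpoly.irreducible hint).coprime_iff_not_dvd (n := q)).2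
    (mt minpoly.dvd_iff.1 hq)
  refine ⟨b * q, ?_, ⟨b, by ring⟩, ⟨a * b, by linear_combination -b * q * hab⟩⟩
  simpa using congrArg (aeval lam) hab

lemma surjective_aeval_of_im_ne_zero {lam : ℂ} (him : lam.im ≠ 0) :
    Function.Surjective (aeval lam : ℝ[X] →ₐ[ℝ] ℂ) := fun z => by
  refine ⟨C (z.im / lam.im) * X + C (z.re - z.im / lam.im * lam.re), ?_⟩
  apply Complex.ext <;> simp [him]

lemma exists_linearMap_aeval_eq {K L B : Type*} [Field K] [Ring L] [Algebra K L] [Ring B]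
    [Algebra K B] {lam : L} (hsurj : Function.Surjective (aeval lam : K[X] →ₐ[K] L)) {a v : B}
    (hv : aeval a (minpoly K lam) * v = 0) :
    ∃ T : L →ₗ[K] B, ∀ g : K[X], T (aeval lam g) = aeval a g * v := by
  obtain ⟨σ, hσ⟩ := (aeval lam : K[X] →ₐ[K] L).toLinearMap.exists_rightInverse_of_surjective
    (LinearMap.range_eq_top.2 hsurj)
  refine ⟨LinearMap.mulRight K v ∘ₗ (aeval a).toLinearMap ∘ₗ σ, fun g => ?_⟩
  obtain ⟨h, hh⟩ : minpoly K lam ∣ σ (aeval lam g) - g := minpoly.dvd _ _ <| by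
    rw [map_sub, sub_eq_zero]
    exact LinearMap.congr_fun hσ (aeval lam g)
  have : aeval a (σ (aeval lam g) - g) * v = 0 := by
    rw [hh, mul_comm, map_mul, mul_assoc, hv, mul_zero]
  rwa [map_sub, sub_mul, sub_eq_zero] at this

variable {ι : Type*} [Fintype ι] [DecidableEq ι]

lemma mem_spectrum_map_ofReal_iff {A : Matrix ι ι ℝ} {μ : ℂ} :
    μ ∈ spectrum ℂ (A.map Complex.ofReal) ↔ aeval μ A.charpoly = 0 := by
  rw [Matrix.mem_spectrum_iff_isRoot_charpoly,
    show A.map Complex.ofReal = A.map (algebraMap ℝ ℂ) from rfl, Matrix.charpoly_map, IsRoot.def,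
    eval_map_algebraMap]

lemma map_ofReal_aeval (A : Matrix ι ι ℝ) (g : ℝ[X]) :
    (aeval A g).map Complex.ofReal = aeval (A.map Complex.ofReal) (g.map (algebraMap ℝ ℂ)) := by
  rw [aeval_map_algebraMap]
  exact (aeval_algHom_apply (Complex.ofRealAm.mapMatrix) A g).symm

open scoped Matrix.Norms.Operator in
lemma tendsto_inv_pow_smul_aeval_pow {A : Matrix ι ι ℝ} {g : ℝ[X]} {r : ℝ}
    (hg : ∀ μ : ℂ, aeval μ A.charpoly = 0 → ‖aeval μ g‖ < r) :
    Tendsto (fun N : ℕ => (r ^ N)⁻¹ • aeval A g ^ N) atTop (𝓝 0) := by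
  rcases isEmpty_or_nonempty ι with _ | _
  · exact tendsto_const_nhds.congr fun N => Subsingleton.elim _ _
  have hspec : ∀ ν ∈ spectrum ℂ ((aeval A g).map Complex.ofReal), ‖ν‖ < r := by
    rw [map_ofReal_aeval, spectrum.map_polynomial_aeval]
    rintro _ ⟨μ, hμ, rfl⟩
    simpa only [eval_map_algebraMap] using hg μ (mem_spectrum_map_ofReal_iff.1 hμ)
  have hre : Continuous fun M : Matrix ι ι ℂ => M.map Complex.re :=
    continuous_id.matrix_map Complex.continuous_re
  have := (hre.tendsto 0).comp (tendsto_inv_pow_smul_pow_of_spectrum_lt hspec)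
  rw [Matrix.map_zero _ Complex.zero_re] at this
  refine this.congr fun N => ?_
  have hpow : (aeval A g).map Complex.ofReal ^ N = (aeval A g ^ N).map Complex.ofReal :=
    (map_pow (Complex.ofRealHom.mapMatrix) (aeval A g) N).symm
  ext i j
  simp [hpow, ← Complex.ofReal_pow, ← Complex.ofReal_inv]

lemma aeval_ne_zero_of_charpoly_root {A : Matrix ι ι ℝ} {g : ℝ[X]} {μ : ℂ}
    (hμ : aeval μ A.charpoly = 0) (hg : aeval μ g ≠ 0) : aeval A g ≠ 0 := by
  intro hA
  have : Nonempty ι := by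
    by_contra h
    rw [not_nonempty_iff] at h
    simp [Matrix.charpoly_isEmpty] at hμ
  have := spectrum.subset_polynomial_aeval _ (g.map (algebraMap ℝ ℂ))
    ⟨μ, mem_spectrum_map_ofReal_iff.2 hμ, rfl⟩
  rw [← map_ofReal_aeval, hA, Matrix.map_zero _ Complex.ofReal_zero, spectrum.zero_eq] at this
  exact hg (by simpa [eval_map_algebraMap] using this)

lemma pow_sub_pow_mul_of_isIdempotentElem {R : Type*} [Ring R] {a p : R} (hp : IsIdempotentElem p)
    (hap : Commute a p) {N : ℕ} (hN : N ≠ 0) : a ^ N - a ^ N * p = (a * (1 - p)) ^ N := by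
  rw [((Commute.one_right a).sub_right hap).mul_pow, hp.one_sub.pow_eq hN, mul_sub, mul_one]

lemma norm_aeval_X_mul_one_sub_lt {p e : ℝ[X]} {lam μ : ℂ} (hlam : lam ≠ 0)
    (hdom : ∀ ν : ℂ, aeval ν p = 0 → ν ≠ lam → ν ≠ starRingEnd ℂ lam → ‖ν‖ < ‖lam‖)
    (he : aeval lam e = 1) (hidem : p ∣ e * (1 - e)) (hμ : aeval μ p = 0) :
    ‖aeval μ (X * (1 - e))‖ < ‖lam‖ := by
  have hvalue : aeval μ e = 0 ∨ 1 - aeval μ e = 0 := by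
    simpa [hμ] using aeval_eq_zero_of_dvd_aeval_eq_zero hidem hμ
  have hconj : aeval (starRingEnd ℂ lam) e = 1 := by
    rw [aeval_conj, he, map_one]
  rcases hvalue with h | h
  · have hne : ∀ ν : ℂ, aeval ν e = 1 → μ ≠ ν := by
      rintro _ hν rfl
      exact zero_ne_one (h.symm.trans hν)
    simpa [h] using hdom μ hμ (hne _ he) (hne _ hconj)
  · simpa [h] using hlam

theorem exists_tendsto_inv_pow_smul_pow_sub {A : Matrix ι ι ℝ} {lam : ℂ}
    (hsimple : (A.charpoly.aroots ℂ).count lam = 1) (him : lam.im ≠ 0)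
    (hdom : ∀ μ ∈ A.charpoly.aroots ℂ, μ ≠ lam → μ ≠ starRingEnd ℂ lam → ‖μ‖ < ‖lam‖) :
    ∃ T : ℂ →L[ℝ] Matrix ι ι ℝ, T ≠ 0 ∧
      Tendsto (fun N : ℕ => (‖lam‖ ^ N)⁻¹ • (A ^ N - T (lam ^ N))) atTop (𝓝 0) := by
  have hlam : lam ≠ 0 := by
    rintro rfl
    exact him Complex.zero_im
  obtain ⟨hcharpoly, hroot⟩ := mem_aroots.1 (Multiset.count_pos.1 (hsimple.symm ▸ one_pos))
  obtain ⟨e, he, hann, hidem⟩ := exists_spectral_idempotent hsimple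
  have haeval : ∀ {g : ℝ[X]}, A.charpoly ∣ g → aeval A g = 0 := fun h =>
    aeval_eq_zero_of_dvd_aeval_eq_zero h A.aeval_self_charpoly
  obtain ⟨T, hT⟩ := exists_linearMap_aeval_eq (surjective_aeval_of_im_ne_zero him)
    (a := A) (v := aeval A e) (by rw [← map_mul, haeval hann])
  refine ⟨T.toContinuousLinearMap, fun hT0 => ?_, ?_⟩
  · refine aeval_ne_zero_of_charpoly_root hroot (he.trans_ne one_ne_zero) ?_
    have hT1 : T 1 = 0 := DFunLike.congr_fun hT0 1
    simpa [hT1] using (hT 1).symm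
  have hP : IsIdempotentElem (aeval A e) := by
    have := haeval hidem
    rwa [map_mul, map_sub, map_one, mul_sub, mul_one, sub_eq_zero, eq_comm] at this
  have hcomm : Commute A (aeval A e) := by
    simpa using (Commute.all X e).map (aeval A)
  refine (tendsto_inv_pow_smul_aeval_pow fun μ hμ => norm_aeval_X_mul_one_sub_lt hlam
    (fun ν hν => hdom ν (mem_aroots.2 ⟨hcharpoly, hν⟩)) he hidem hμ).congr' ?_
  filter_upwards [eventually_ne_atTop 0] with N hN
  have hTN : T (lam ^ N) = A ^ N * aeval A e := by simpa using hT (X ^ N)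
  rw [LinearMap.coe_toContinuousLinearMap', hTN,
    pow_sub_pow_mul_of_isIdempotentElem hP hcomm hN, map_mul, map_sub, map_one, aeval_X]

end Spectral

section Degree

variable {ι : Type*} [Fintype ι]

/-- The formula of `Dmat` for real matrices; extending `D` from integer to real matrices allows
passing to limits of rescaled powers. -/
noncomputable def realDegree (M : Matrix ι ι ℝ) : ℝ :=
  (∑ j, univ.fold max 0 fun i => -M i j) + univ.fold max 0 fun i => ∑ j, M i j

lemma intCast_fold_max {ι R : Type*} [Ring R] [LinearOrder R] [IsStrictOrderedRing R]
    (s : Finset ι) (b : ℤ) (f : ι → ℤ) :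
    ((s.fold max b f : ℤ) : R) = s.fold max (b : R) fun i => (f i : R) :=
  (Finset.fold_hom (m := ((↑) : ℤ → R)) fun _ _ => Int.cast_max).symm

lemma cast_Dmat {n : ℕ} (M : Matrix (Fin n) (Fin n) ℤ) :
    (Dmat M : ℝ) = realDegree (M.map Int.cast) := by
  simp [Dmat, realDegree, intCast_fold_max]

lemma cast_Dmat_pow {n : ℕ} (A : Matrix (Fin n) (Fin n) ℤ) (N : ℕ) :
    (Dmat (A ^ N) : ℝ) = realDegree (A.map Int.cast ^ N) := by
  rw [cast_Dmat]
  exact congrArg realDegree (map_pow (Int.castRingHom ℝ).mapMatrix A N)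

lemma isPiecewiseLinear_realDegree : IsPiecewiseLinear (realDegree (ι := ι)) := by
  set entry : ι → ι → Matrix ι ι ℝ →L[ℝ] ℝ := fun i j =>
    (Matrix.entryLinearMap ℝ ℝ i j).toContinuousLinearMap
  have hcol : ∀ i j, IsPiecewiseLinear fun M : Matrix ι ι ℝ => -M i j := fun i j =>
    .of_clm (-entry i j)
  have hrow : ∀ i, IsPiecewiseLinear fun M : Matrix ι ι ℝ => ∑ j, M i j := fun i =>
    .sum fun j _ => .of_clm (entry i j)
  exact .add (.sum fun j _ => .fold_max fun i _ => hcol i j) (.fold_max fun i _ => hrow i)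

lemma le_fold_max_of_mem {ι α : Type*} [LinearOrder α] {s : Finset ι} {i : ι} (hi : i ∈ s) (b : α)
    (f : ι → α) : f i ≤ s.fold max b f :=
  (Finset.le_fold_max _).2 (.inr ⟨i, hi, le_rfl⟩)

lemma init_le_fold_max {ι α : Type*} [LinearOrder α] (s : Finset ι) (b : α) (f : ι → α) :
    b ≤ s.fold max b f :=
  (Finset.le_fold_max _).2 (.inl le_rfl)

lemma realDegree_pos {M : Matrix ι ι ℝ} (hM : M ≠ 0) : 0 < realDegree M := by
  have hcol : ∀ j, 0 ≤ univ.fold max 0 fun i => -M i j := fun j => init_le_fold_max _ _ _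
  by_cases hneg : ∃ i j, M i j < 0
  · obtain ⟨i, j, hij⟩ := hneg
    refine add_pos_of_pos_of_nonneg (sum_pos' (fun j _ => hcol j) ⟨j, mem_univ j, ?_⟩)
      (init_le_fold_max _ _ _)
    exact (neg_pos.2 hij).trans_le (le_fold_max_of_mem (mem_univ i) 0 fun i => -M i j)
  · push Not at hneg
    obtain ⟨i, j, hij⟩ : ∃ i j, M i j ≠ 0 := by
      by_contra! h
      exact hM (Matrix.ext h)
    refine add_pos_of_nonneg_of_pos (sum_nonneg fun j _ => hcol j) ?_
    refine lt_of_lt_of_le ?_ (le_fold_max_of_mem (mem_univ i) 0 fun i => ∑ j, M i j)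
    exact sum_pos' (fun j _ => hneg i j) ⟨j, mem_univ j, (hneg i j).lt_of_ne' hij⟩

end Degree

lemma roots_charpoly_map_intCast {ι : Type*} [Fintype ι] [DecidableEq ι] (A : Matrix ι ι ℤ) :
    (A.map (Int.cast : ℤ → ℂ)).charpoly.roots = (A.map (Int.cast : ℤ → ℝ)).charpoly.aroots ℂ := by
  have hmap : A.map (Int.cast : ℤ → ℂ) = (A.map (Int.cast : ℤ → ℝ)).map (algebraMap ℝ ℂ) := by
    ext
    simp
  rw [hmap, Matrix.charpoly_map, aroots_def]

theorem degSeq_no_linear_recurrence_of_dominant_nonreal_general {ι : Type*} [Fintype ι]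
    [DecidableEq ι] {D : Matrix ι ι ℝ → ℝ} (hD : IsPiecewiseLinear D)
    (hpos : ∀ M, M ≠ 0 → 0 < D M) {A : Matrix ι ι ℝ} {lam : ℂ} (hlam : lam ≠ 0)
    (hsimple : (A.charpoly.aroots ℂ).count lam = 1)
    (hirr : ∀ m : ℕ, 1 ≤ m → (lam / (‖lam‖ : ℂ)) ^ m ≠ 1)
    (hdom : ∀ μ ∈ A.charpoly.aroots ℂ, μ ≠ lam → μ ≠ starRingEnd ℂ lam → ‖μ‖ < ‖lam‖)
    {k : ℕ} (c : Fin k → ℝ) :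
    ¬ ∀ N : ℕ, D (A ^ (N + k)) = ∑ i : Fin k, c i * D (A ^ (N + k - 1 - (i : ℕ))) := by
  have him : lam.im ≠ 0 := by
    simpa using im_pow_ne_zero_of_div_norm_pow_ne_one hlam hirr 1 le_rfl
  obtain ⟨T, hT, hA⟩ := exists_tendsto_inv_pow_smul_pow_sub hsimple him hdom
  exact hD.not_linear_recurrence_of_tendsto hpos hT hlam hirr hA c

/-- If the characteristic polynomial of a nonsingular integer matrix `A` has a simple
nonreal dominant root `λ` with `λ/|λ|` not a root of unity, then the degree sequence
`D(A^N)` of the iterates of the associated monomial map does not satisfy any linear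
recurrence with constant coefficients. -/
theorem degSeq_no_linear_recurrence_of_dominant_nonreal {n : ℕ} (hn : 1 ≤ n)
    (A : Matrix (Fin n) (Fin n) ℤ) (hA : A.det ≠ 0) (lam : ℂ)
    (hroot : lam ∈ ((A.map (Int.cast : ℤ → ℂ)).charpoly).roots)
    (hsimple : ((A.map (Int.cast : ℤ → ℂ)).charpoly).roots.count lam = 1)
    (him : lam.im ≠ 0)
    (hirr : ∀ m : ℕ, 1 ≤ m → (lam / (‖lam‖ : ℂ)) ^ m ≠ 1)
    (hdom : ∀ mu ∈ ((A.map (Int.cast : ℤ → ℂ)).charpoly).roots,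
      mu ≠ lam → mu ≠ starRingEnd ℂ lam → ‖mu‖ < ‖lam‖) :
    ¬ ∃ k : ℕ, 1 ≤ k ∧ ∃ c : Fin k → ℝ,
      ∀ N : ℕ, ((Dmat (A ^ (N + k)) : ℝ)) =
        ∑ i : Fin k, c i * ((Dmat (A ^ (N + k - 1 - (i : ℕ))) : ℝ)) := by
  rintro ⟨k, -, c, hrec⟩
  have hlam : lam ≠ 0 := by
    rintro rfl
    exact him Complex.zero_im
  rw [roots_charpoly_map_intCast] at hsimple hdom
  refine degSeq_no_linear_recurrence_of_dominant_nonreal_general isPiecewiseLinear_realDegree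
    (fun _ => realDegree_pos) hlam hsimple hirr hdom c fun N => ?_
  simpa only [cast_Dmat_pow] using hrec N
end

section
/- Let A be the 3×3 integer matrix with rows (−1,1,0), (−1,0,1), (1,0,0). Then A has determinant 1 (so A is invertible with integer inverse), and the spectral radius of A⁻¹ equals the square of the spectral radius of A: ρ(A⁻¹) = ρ(A)². (Hence the algebraic entropy of the inverse of the associated monomial map is twice the algebraic entropy of the map itself, so algebraic entropy of a birational map need not equal that of its inverse.) -/
open Matrix

/-!
The eigenvalues of an invertible integer matrix have a product of modulus `1`, so one of them, `z`,
satisfies `1 ≤ |z|`. The real roots of `t³ + t² + t - 1` lie in `(0, 1)`, so here `z` is not real,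
the eigenvalues are `a, z, z̄`, and `|a| |z|² = 1`. Hence `ρ(A) = |z|`, while the eigenvalues
`a⁻¹, z⁻¹, z̄⁻¹` of the inverse give `ρ(A⁻¹) = |a|⁻¹ = |z|²`.
-/

open Polynomial ComplexConjugate

section InverseRoots

variable {K : Type*} [Field K]

theorem roots_reverse_X_sub_C {a : K} (ha : a ≠ 0) : (X - C a).reverse.roots = {a⁻¹} := by
  have hreverse : (X - C a).reverse = -(C a * X - C 1) := by
    simp [reverse, reflect_sub, reflect_C]
  rw [hreverse, roots_neg, roots_C_mul_X_sub_C 1 ha, mul_one]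

theorem roots_reverse_prod_X_sub_C {s : Multiset K} (hs : 0 ∉ s) :
    (s.map (X - C ·)).prod.reverse.roots = s.map (·⁻¹) := by
  induction s using Multiset.induction with
  | empty => simp [reverse]
  | cons a s ih =>
    obtain ⟨ha, hs⟩ : 0 ≠ a ∧ 0 ∉ s := by simpa only [Multiset.mem_cons, not_or] using hs
    have hne : (X - C a).reverse * (s.map (X - C ·)).prod.reverse ≠ 0 := by
      simp [X_sub_C_ne_zero, Multiset.prod_eq_zero_iff]
    rw [Multiset.map_cons, Multiset.prod_cons, reverse_mul_of_domain, roots_mul hne, ih hs,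
      roots_reverse_X_sub_C ha.symm, Multiset.map_cons, Multiset.singleton_add]

theorem roots_reverse_of_splits {p : K[X]} (hp : p.Splits) (h0 : 0 ∉ p.roots) :
    p.reverse.roots = p.roots.map (·⁻¹) := by
  obtain rfl | hne := eq_or_ne p 0
  · simp
  conv_lhs => rw [hp.eq_prod_roots, reverse_mul_of_domain, reverse_C]
  rw [roots_C_mul _ (leadingCoeff_ne_zero.2 hne), roots_reverse_prod_X_sub_C h0]

theorem roots_charpoly_inv_of_splits {n : Type*} [Fintype n] [DecidableEq n] {M : Matrix n n K}
    (hM : IsUnit M.det) (hsplits : M.charpoly.Splits) :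
    M⁻¹.charpoly.roots = M.charpoly.roots.map (·⁻¹) := by
  have h0 : 0 ∉ M.charpoly.roots := fun h ↦ hM.ne_zero <| by
    rw [det_eq_prod_roots_charpoly_of_splits hsplits, Multiset.prod_eq_zero h]
  have hreverse : M⁻¹.charpoly = C ((-1) ^ Fintype.card n * M.det⁻¹) * M.charpoly.reverse := by
    simp [charpoly_inv M ((isUnit_iff_isUnit_det M).2 hM), reverse_charpoly]
  rw [hreverse, roots_C_mul _ (by simp [hM.ne_zero]), roots_reverse_of_splits hsplits h0]

end InverseRoots

section ConjugateRoots

variable {R : Type*} [CommRing R] [Algebra R ℝ] [Algebra R ℂ] [IsScalarTower R ℝ ℂ]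
  {p : R[X]} {z : ℂ}

theorem conj_mem_aroots (hz : z ∈ p.aroots ℂ) : conj z ∈ p.aroots ℂ := by
  obtain ⟨hp, hroot⟩ := mem_aroots'.1 hz
  refine mem_aroots'.2 ⟨hp, ?_⟩
  rw [← aeval_map_algebraMap ℝ, aeval_conj, aeval_map_algebraMap, hroot, map_zero]

theorem exists_aroots_eq_of_im_ne_zero (hcard : (p.aroots ℂ).card = 3) (hz : z ∈ p.aroots ℂ)
    (him : z.im ≠ 0) : ∃ a, p.aroots ℂ = {a, z, conj z} := by
  have hne : z ≠ conj z := fun h ↦ him (Complex.conj_eq_iff_im.1 h.symm)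
  have hpair : {z, conj z} ≤ p.aroots ℂ := by
    rw [Multiset.le_iff_subset (by simp [hne])]
    simp [Multiset.insert_eq_cons, Multiset.cons_subset, hz, conj_mem_aroots hz]
  obtain ⟨t, ht⟩ := Multiset.le_iff_exists_add.1 hpair
  have hcard_add : 3 = 2 + t.card := by
    rw [← hcard, ht, Multiset.card_add, Multiset.card_pair]
  obtain ⟨a, rfl⟩ := Multiset.card_eq_one.1 (show t.card = 1 by omega)
  exact ⟨a, by rw [ht, add_comm]; rfl⟩

end ConjugateRoots

section IntMatrix

variable {n : ℕ} (A : Matrix (Fin n) (Fin n) ℤ)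

theorem charpoly_map_intCast :
    (A.map (Int.cast : ℤ → ℂ)).charpoly = A.charpoly.map (algebraMap ℤ ℂ) :=
  charpoly_map A (algebraMap ℤ ℂ)

theorem specRad_eq_fold_aroots :
    specRad A = ((A.charpoly.aroots ℂ).map (‖·‖)).fold max 0 := by
  rw [specRad, charpoly_map_intCast, aroots]

theorem card_aroots_charpoly : (A.charpoly.aroots ℂ).card = n := by
  rw [aroots, ← charpoly_map_intCast, IsAlgClosed.card_roots_eq_natDegree,
    charpoly_natDegree_eq_dim, Fintype.card_fin]

theorem prod_aroots_charpoly : (A.charpoly.aroots ℂ).prod = A.det := by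
  rw [aroots, ← charpoly_map_intCast, ← det_eq_prod_roots_charpoly, Int.cast_det]

variable {A}

theorem aroots_charpoly_inv (hA : IsUnit A.det) :
    A⁻¹.charpoly.aroots ℂ = (A.charpoly.aroots ℂ).map (·⁻¹) := by
  have hdet : IsUnit (A.map (Int.cast : ℤ → ℂ)).det := by
    rw [← Int.cast_det]
    exact hA.map (Int.castRingHom ℂ)
  have hinv : A⁻¹.map (Int.cast : ℤ → ℂ) = (A.map Int.cast)⁻¹ := by
    refine (inv_eq_left_inv ?_).symm
    simpa [nonsing_inv_mul A hA] using ((Int.castRingHom ℂ).mapMatrix.map_mul A⁻¹ A).symm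
  rw [aroots, ← charpoly_map_intCast, hinv,
    roots_charpoly_inv_of_splits hdet (IsAlgClosed.splits _), charpoly_map_intCast]

theorem norm_prod_aroots_charpoly (hA : IsUnit A.det) : ‖(A.charpoly.aroots ℂ).prod‖ = 1 := by
  rw [prod_aroots_charpoly, Complex.norm_intCast, ← Int.cast_abs, Int.isUnit_iff_abs_eq.1 hA,
    Int.cast_one]

theorem exists_one_le_norm_mem_aroots_charpoly [NeZero n] (hA : IsUnit A.det) :
    ∃ z ∈ A.charpoly.aroots ℂ, 1 ≤ ‖z‖ := by
  by_contra! hlt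
  have hne : A.charpoly.aroots ℂ ≠ ∅ := by
    rw [Multiset.empty_eq_zero, ← Multiset.card_pos, card_aroots_charpoly]
    exact Nat.pos_of_neZero n
  have hmul (z w : ℂ) (hz : ‖z‖ < 1) (hw : ‖w‖ < 1) : ‖z * w‖ < 1 := by
    rw [norm_mul]
    exact mul_lt_one_of_nonneg_of_lt_one_left (norm_nonneg z) hz hw.le
  exact (Multiset.prod_induction_nonempty (‖·‖ < 1) hmul hne hlt).ne (norm_prod_aroots_charpoly hA)

end IntMatrix

theorem specRad_inv_eq_sq_of_im_ne_zero {A : Matrix (Fin 3) (Fin 3) ℤ} (hA : IsUnit A.det) {z : ℂ}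
    (hz : z ∈ A.charpoly.aroots ℂ) (him : z.im ≠ 0) (hnorm : 1 ≤ ‖z‖) :
    specRad A⁻¹ = specRad A ^ 2 := by
  obtain ⟨a, hroots⟩ := exists_aroots_eq_of_im_ne_zero (card_aroots_charpoly A) hz him
  have ha : ‖a‖⁻¹ = ‖z‖ ^ 2 := by
    refine inv_eq_of_mul_eq_one_right ?_
    simpa [hroots, sq] using norm_prod_aroots_charpoly hA
  have hspec : specRad A = ‖z‖ := by
    have hle : ‖a‖ ≤ ‖z‖ := by
      rw [← inv_inv ‖a‖, ha]
      exact (inv_le_one_of_one_le₀ (one_le_pow₀ hnorm)).trans hnorm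
    simp [specRad_eq_fold_aroots, hroots, hle, Multiset.fold_singleton]
  have hspec_inv : specRad A⁻¹ = ‖z‖ ^ 2 := by
    have hle : ‖z‖⁻¹ ≤ ‖z‖ ^ 2 := (inv_le_one_of_one_le₀ hnorm).trans (one_le_pow₀ hnorm)
    simp [specRad_eq_fold_aroots, aroots_charpoly_inv hA, hroots, ha, hle,
      Multiset.fold_singleton]
  rw [hspec, hspec_inv]

theorem charpoly_companion_fin_three {R : Type*} [CommRing R] (a b c : R) :
    !![-a, 1, 0; -b, 0, 1; -c, 0, 0].charpoly = X ^ 3 + C a * X ^ 2 + C b * X + C c := by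
  have hcharmatrix : !![-a, 1, 0; -b, 0, 1; -c, 0, 0].charmatrix =
      !![X + C a, -1, 0; C b, X, -1; C c, 0, X] := by
    ext1 i j
    fin_cases i <;> fin_cases j <;> simp [charmatrix]
  calc !![-a, 1, 0; -b, 0, 1; -c, 0, 0].charpoly
      = (X + C a) * X * X - (X + C a) * -1 * 0 - -1 * C b * X + -1 * -1 * C c + 0 * C b * 0
          - 0 * X * C c := by
        rw [charpoly, hcharmatrix, det_fin_three]
        rfl
    _ = X ^ 3 + C a * X ^ 2 + C b * X + C c := by ring

theorem abs_lt_one_of_cube_add_sq_add_self_eq_one {r : ℝ} (hr : r ^ 3 + r ^ 2 + r = 1) :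
    |r| < 1 := by
  have hmul : 0 < r * (r ^ 2 + r + 1) := by linarith
  have hpos : 0 < r := pos_of_mul_pos_left hmul (by nlinarith [sq_nonneg (r + 1)])
  rw [abs_of_pos hpos]
  linarith [pow_pos hpos 2, pow_pos hpos 3]

/-- The matrix `A` of the monomial map `(x,y,z) ↦ (y/x, z/x, x)` has determinant `1`,
and the spectral radius of its inverse is the square of its spectral radius; hence the
algebraic entropy of the inverse monomial map is twice that of the map itself. -/
theorem specRad_inv_eq_sq :
    let A : Matrix (Fin 3) (Fin 3) ℤ := !![-1, 1, 0; -1, 0, 1; 1, 0, 0]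
    A.det = 1 ∧ specRad (A⁻¹) = (specRad A) ^ 2 := by
  intro A
  have hdet : A.det = 1 := by simp [A, det_fin_three]
  have hunit : IsUnit A.det := hdet ▸ isUnit_one
  have hcharpoly : A.charpoly = X ^ 3 + X ^ 2 + X - 1 := by
    simpa [A, sub_eq_add_neg] using charpoly_companion_fin_three (R := ℤ) 1 1 (-1)
  obtain ⟨z, hz, hnorm⟩ := exists_one_le_norm_mem_aroots_charpoly hunit
  refine ⟨hdet, specRad_inv_eq_sq_of_im_ne_zero hunit hz (fun him ↦ ?_) hnorm⟩
  obtain ⟨r, rfl⟩ : ∃ r : ℝ, (r : ℂ) = z := ⟨z.re, Complex.ext rfl him.symm⟩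
  have hroot : (r : ℂ) ^ 3 + r ^ 2 + r = 1 := by
    simpa [hcharpoly, sub_eq_zero] using (mem_aroots'.1 hz).2
  rw [Complex.norm_real] at hnorm
  exact (abs_lt_one_of_cube_add_sq_add_self_eq_one (by exact_mod_cast hroot)).not_ge hnorm
end
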